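/- arXiv:2410.05539 — 7 statements merged into one kernel-verified Lean document; each statement's English description precedes it below -/
import Mathlib

section
/- Let 0 < d < ρ < 1. There exists a unique x̄ ∈ (0,u) solving G(x̄) = −((1−ρ)d)/((1−d)ρ) + 1. Moreover, this solution x̄ is strictly increasing in ρ (for fixed d) and strictly decreasing in d (for fixed ρ). -/
open Set MeasureTheory intervalIntegral

/-
With `odds p = p / (1 - p)`, the right-hand side of the equation is `1 - odds d / odds ρ`. Since
`odds` is positive and strictly increasing on `(0, 1)`, this number lies in `(0, 1)`, increases with
`ρ` and decreases with `d`. The function `G` is continuous and strictly increasing from `0` to at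
least `1`, so the intermediate value theorem gives the solution, and `G⁻¹` preserves both
monotonicities.
-/

section Odds

variable {K : Type*} [Field K]

/-- The odds `p : (1 - p)` of a probability `p`, written as a quotient; the junk value at `p = 1`
is `0`. -/
def odds (p : K) : K := p / (1 - p)

theorem odds_div_odds (p q : K) : odds p / odds q = (1 - q) * p / ((1 - p) * q) := by
  rw [odds, odds, div_div_div_eq, mul_comm p]

variable [LinearOrder K] [IsStrictOrderedRing K] {p p₁ p₂ q q₁ q₂ : K}

theorem odds_pos (hp₀ : 0 < p) (hp₁ : p < 1) : 0 < odds p :=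
  div_pos hp₀ (sub_pos.2 hp₁)

theorem strictMonoOn_odds : StrictMonoOn (odds : K → K) (Iio 1) := by
  intro p hp q hq hpq
  rw [odds, odds, div_lt_div_iff₀ (sub_pos.2 hp) (sub_pos.2 hq)]
  linear_combination hpq

theorem odds_div_odds_mem_Ioo (hp : 0 < p) (hpq : p < q) (hq : q < 1) :
    odds p / odds q ∈ Ioo 0 1 :=
  have hp₁ : p < 1 := hpq.trans hq
  have odds_q_pos : 0 < odds q := odds_pos (hp.trans hpq) hq
  ⟨div_pos (odds_pos hp hp₁) odds_q_pos, (div_lt_one odds_q_pos).2 (strictMonoOn_odds hp₁ hq hpq)⟩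

theorem odds_div_odds_lt_of_lt_left (hp : p₁ < p₂) (hp₂ : p₂ < 1) (hq₀ : 0 < q) (hq₁ : q < 1) :
    odds p₁ / odds q < odds p₂ / odds q :=
  div_lt_div_of_pos_right (strictMonoOn_odds (hp.trans hp₂) hp₂ hp) (odds_pos hq₀ hq₁)

theorem odds_div_odds_lt_of_lt_right (hp₀ : 0 < p) (hp₁ : p < 1) (hq₁ : 0 < q₁) (hq : q₁ < q₂)
    (hq₂ : q₂ < 1) : odds p / odds q₂ < odds p / odds q₁ :=
  have hq₁' : q₁ < 1 := hq.trans hq₂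
  div_lt_div_of_pos_left (odds_pos hp₀ hp₁) (odds_pos hq₁ hq₁') (strictMonoOn_odds hq₁' hq₂ hq)

end Odds

section IntermediateValue

variable {α β : Type*} [ConditionallyCompleteLinearOrder α] [TopologicalSpace α] [OrderTopology α]
  [DenselyOrdered α] [LinearOrder β] [TopologicalSpace β] [OrderClosedTopology β]

theorem existsUnique_mem_Ioi_inter_eq_of_strictMonoOn {g : α → β} {s : Set α} {a b : α} {c : β}
    (hs : s.OrdConnected) (hg_cont : ContinuousOn g (Ici a ∩ s))
    (hg_mono : StrictMonoOn g (Ici a ∩ s)) (ha : a ∈ s) (hb : b ∈ Ici a ∩ s)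
    (hc : c ∈ Ioo (g a) (g b)) : ∃! x, x ∈ Ioi a ∩ s ∧ g x = c := by
  have Icc_subset : Icc a b ⊆ Ici a ∩ s := subset_inter Icc_subset_Ici_self (hs.out ha hb.2)
  obtain ⟨x, hx, hxc⟩ := intermediate_value_Ioo hb.1 (hg_cont.mono Icc_subset) hc
  have hxs : x ∈ Ici a ∩ s := Icc_subset (Ioo_subset_Icc_self hx)
  refine ⟨x, ⟨⟨hx.1, hxs.2⟩, hxc⟩, fun y ⟨⟨hay, hys⟩, hyc⟩ => ?_⟩
  exact hg_mono.injOn ⟨hay.le, hys⟩ hxs (hyc.trans hxc.symm)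

end IntermediateValue

/-- The generalized hazard rate `x f(x) / (1 - F(x))` of a density `f` on `[0, ∞)`, where
`F(x) = ∫₀ˣ f` is its distribution function; the junk value where `F(x) = 1` is `0`. -/
noncomputable def generalizedHazardRate (f : ℝ → ℝ) (x : ℝ) : ℝ :=
  x * f x / (1 - ∫ t in (0 : ℝ)..x, f t)

theorem continuousOn_generalizedHazardRate {f : ℝ → ℝ} {s : Set ℝ}
    (hf_int : ∀ a b, IntervalIntegrable f volume a b) (hf_cont : ContinuousOn f s)
    (hF : ∀ x ∈ s, ∫ t in (0 : ℝ)..x, f t ≠ 1) : ContinuousOn (generalizedHazardRate f) s :=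
  (continuousOn_id.mul hf_cont).div
    (continuousOn_const.sub (continuous_primitive hf_int 0).continuousOn)
    fun x hx => sub_ne_zero.2 (hF x hx).symm

theorem stmt_1_general (u : EReal) (G : ℝ → ℝ)
    (hG_cont : ContinuousOn G {x : ℝ | 0 ≤ x ∧ (x : EReal) < u})
    (hG_mono : StrictMonoOn G {x : ℝ | 0 ≤ x ∧ (x : EReal) < u})
    (hG_zero : G 0 = 0)
    (hG_lim : ∀ c : ℝ, c < 1 → ∃ x : ℝ, 0 ≤ x ∧ (x : EReal) < u ∧ c < G x) :
    (∀ d ρ : ℝ, 0 < d → d < ρ → ρ < 1 →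
      ∃! x : ℝ, (0 < x ∧ (x : EReal) < u) ∧
        G x = 1 - ((1 - ρ) * d) / ((1 - d) * ρ)) ∧
    (∀ d ρ₁ ρ₂ x₁ x₂ : ℝ, 0 < d → d < ρ₁ → ρ₁ < ρ₂ → ρ₂ < 1 →
      (0 < x₁ ∧ (x₁ : EReal) < u) → G x₁ = 1 - ((1 - ρ₁) * d) / ((1 - d) * ρ₁) →
      (0 < x₂ ∧ (x₂ : EReal) < u) → G x₂ = 1 - ((1 - ρ₂) * d) / ((1 - d) * ρ₂) →
      x₁ < x₂) ∧
    (∀ ρ d₁ d₂ x₁ x₂ : ℝ, 0 < d₁ → d₁ < d₂ → d₂ < ρ → ρ < 1 →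
      (0 < x₁ ∧ (x₁ : EReal) < u) → G x₁ = 1 - ((1 - ρ) * d₁) / ((1 - d₁) * ρ) →
      (0 < x₂ ∧ (x₂ : EReal) < u) → G x₂ = 1 - ((1 - ρ) * d₂) / ((1 - d₂) * ρ) →
      x₂ < x₁) := by
  have lt_of_G_lt {x y : ℝ} (hx : 0 < x ∧ (x : EReal) < u) (hy : 0 < y ∧ (y : EReal) < u)
      (hxy : G x < G y) : x < y :=
    (hG_mono.lt_iff_lt ⟨hx.1.le, hx.2⟩ ⟨hy.1.le, hy.2⟩).1 hxy
  simp only [← odds_div_odds]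
  refine ⟨fun d ρ hd hdρ hρ => ?_, fun d ρ₁ ρ₂ x₁ x₂ hd hdρ₁ hρ hρ₂ hx₁ hGx₁ hx₂ hGx₂ => ?_,
    fun ρ d₁ d₂ x₁ x₂ hd₁ hd hd₂ρ hρ hx₁ hGx₁ hx₂ hGx₂ => ?_⟩
  · obtain ⟨ratio_pos, ratio_lt_one⟩ := odds_div_odds_mem_Ioo hd hdρ hρ
    obtain ⟨y, hy₀, hyu, hy⟩ := hG_lim (1 - odds d / odds ρ) (sub_lt_self 1 ratio_pos)
    exact existsUnique_mem_Ioi_inter_eq_of_strictMonoOn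
      (ordConnected_Iio.preimage_mono EReal.coe_strictMono.monotone) hG_cont hG_mono
      ((EReal.coe_le_coe hy₀).trans_lt hyu) ⟨hy₀, hyu⟩ ⟨by linarith, hy⟩
  · have ratio_lt : odds d / odds ρ₂ < odds d / odds ρ₁ :=
      odds_div_odds_lt_of_lt_right hd (by linarith) (hd.trans hdρ₁) hρ hρ₂
    exact lt_of_G_lt hx₁ hx₂ (by linarith)
  · have ratio_lt : odds d₁ / odds ρ < odds d₂ / odds ρ :=
      odds_div_odds_lt_of_lt_left hd (hd₂ρ.trans hρ) (by linarith) hρ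
    exact lt_of_G_lt hx₂ hx₁ (by linarith)

/-- Under Assumption 1 on the income distribution with support [0,u)
(u ∈ (0,∞], encoded as `u : EReal`), for any 0 < d < ρ < 1 there exists a unique
x̄ ∈ (0,u) solving G(x̄) = 1 − ((1−ρ)d)/((1−d)ρ); moreover x̄ is strictly
increasing in ρ and strictly decreasing in d. -/
theorem stmt_1 (u : EReal) (hu : 0 < u)
    (f : ℝ → ℝ) (hf_cont : Continuous f)
    (hf_pos : ∀ x : ℝ, 0 < x → (x : EReal) < u → 0 < f x)
    (hf_zero : ∀ x : ℝ, x ≤ 0 ∨ u ≤ (x : EReal) → f x = 0)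
    (hf_prob : ∫ t : ℝ, f t = 1)
    (F : ℝ → ℝ) (hF : ∀ x : ℝ, F x = ∫ t in (0:ℝ)..x, f t)
    (hF_lt : ∀ x : ℝ, (x : EReal) < u → F x < 1)
    (G : ℝ → ℝ) (hG : ∀ x : ℝ, G x = x * f x / (1 - F x))
    -- Assumption 1:
    (hG_mono : StrictMonoOn G {x : ℝ | 0 ≤ x ∧ (x : EReal) < u})
    (hG_zero : G 0 = 0)
    (hG_lim : ∀ c : ℝ, c < 1 → ∃ x : ℝ, 0 ≤ x ∧ (x : EReal) < u ∧ c < G x) :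
    (∀ d ρ : ℝ, 0 < d → d < ρ → ρ < 1 →
      ∃! x : ℝ, (0 < x ∧ (x : EReal) < u) ∧
        G x = 1 - ((1 - ρ) * d) / ((1 - d) * ρ)) ∧
    -- strictly increasing in ρ (d fixed):
    (∀ d ρ₁ ρ₂ x₁ x₂ : ℝ, 0 < d → d < ρ₁ → ρ₁ < ρ₂ → ρ₂ < 1 →
      (0 < x₁ ∧ (x₁ : EReal) < u) → G x₁ = 1 - ((1 - ρ₁) * d) / ((1 - d) * ρ₁) →
      (0 < x₂ ∧ (x₂ : EReal) < u) → G x₂ = 1 - ((1 - ρ₂) * d) / ((1 - d) * ρ₂) →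
      x₁ < x₂) ∧
    -- strictly decreasing in d (ρ fixed):
    (∀ ρ d₁ d₂ x₁ x₂ : ℝ, 0 < d₁ → d₁ < d₂ → d₂ < ρ → ρ < 1 →
      (0 < x₁ ∧ (x₁ : EReal) < u) → G x₁ = 1 - ((1 - ρ) * d₁) / ((1 - d₁) * ρ) →
      (0 < x₂ ∧ (x₂ : EReal) < u) → G x₂ = 1 - ((1 - ρ) * d₂) / ((1 - d₂) * ρ) →
      x₂ < x₁) := by
  obtain rfl := funext hF
  obtain rfl : G = generalizedHazardRate f := funext hG
  exact stmt_1_general u _ (continuousOn_generalizedHazardRate hf_cont.intervalIntegrable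
    hf_cont.continuousOn fun x hx => (hF_lt x hx.2).ne) hG_mono hG_zero hG_lim
end

section
/- Let ρ ∈ (0,1) and let s : ℝ → ℝ be continuous on [0,ρ] and twice continuously differentiable on (0,ρ) with s(0) = 0 and, for all d ∈ (0,ρ): 0 < s(d) ≤ 1, s′(d) > 0 and s″(d) < 0. Then there exists a unique d* ∈ (0,ρ) satisfying (ρ − d*)·s′(d*) + ρ·s(d*)² − s(d*) = 0 (equivalently, (1 − s(d*)d*)/(1 − s(d*)ρ) = (s(d*) + s′(d*)d*)/(ρ·s′(d*))). -/
open Set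

/-!
Write `F d = (ρ - d) s'(d) + ρ s(d)² - s(d)`. Concavity gives `s'(y) ≤ s'(x)` and
`s(y) - s(x) ≤ (y - x) s'(x)` for `x < y`, and adding these up yields
`F(y) - F(x) ≤ -(s(y) - s(x)) (2 - ρ (s(x) + s(y)))`, which is negative because `s` increases and
`ρ s < 1`. So `F` is strictly decreasing. Near `0` it is positive, as
`s` vanishes there while `(ρ - d) s'(d)` stays away from `0`; near `ρ` it is negative, as
`(ρ - d) s'(d)` vanishes there while `s (1 - ρ s)` stays away from `0`. Finally `F` is continuous,
because by Darboux's theorem the monotone function `s'` has no jumps.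
-/

open Filter Topology

section MonotoneContinuity

variable {α β : Type*} [LinearOrder α] [TopologicalSpace α] [OrderClosedTopology α]
  [LinearOrder β] [DenselyOrdered β] {f : α → β} {t : Set α}

theorem eventually_lt_of_monotoneOn_of_ordConnected_image (hf : MonotoneOn f t)
    (himage : OrdConnected (f '' t)) {x : α} (hx : x ∈ t) {u : β} (hu : f x < u) :
    ∀ᶠ y in 𝓝[t] x, f y < u := by
  by_cases hmax : ∀ y ∈ t, f y ≤ f x
  · filter_upwards [self_mem_nhdsWithin] with y hy using (hmax y hy).trans_lt hu
  · push Not at hmax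
    obtain ⟨y, hy, hxy⟩ := hmax
    obtain ⟨v, hxv, hv⟩ := exists_between (lt_min hu hxy)
    obtain ⟨hvu, hvy⟩ := lt_min_iff.mp hv
    obtain ⟨z, hz, rfl⟩ : v ∈ f '' t :=
      himage.out (mem_image_of_mem f hx) (mem_image_of_mem f hy) ⟨hxv.le, hvy.le⟩
    have hxz : x < z := hf.reflect_lt hx hz hxv
    filter_upwards [self_mem_nhdsWithin, mem_nhdsWithin_of_mem_nhds (Iio_mem_nhds hxz)]
      with w hw hwz using (hf hw hz (le_of_lt hwz)).trans_lt hvu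

variable [TopologicalSpace β] [OrderTopology β]

theorem continuousOn_of_monotoneOn_of_ordConnected_image (hf : MonotoneOn f t)
    (himage : OrdConnected (f '' t)) : ContinuousOn f t := fun _ hx ↦
  tendsto_order.2
    ⟨fun _ hl ↦ eventually_lt_of_monotoneOn_of_ordConnected_image (α := αᵒᵈ) (β := βᵒᵈ)
      hf.dual himage.dual hx hl,
    fun _ hu ↦ eventually_lt_of_monotoneOn_of_ordConnected_image hf himage hx hu⟩

theorem continuousOn_of_antitoneOn_of_ordConnected_image (hf : AntitoneOn f t)
    (himage : OrdConnected (f '' t)) : ContinuousOn f t :=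
  continuousOn_of_monotoneOn_of_ordConnected_image (β := βᵒᵈ) hf.dual_right himage.dual

end MonotoneContinuity

theorem continuousOn_deriv_of_concaveOn {t : Set ℝ} {f : ℝ → ℝ} (hf : ConcaveOn ℝ t f)
    (hdiff : ∀ x ∈ t, DifferentiableAt ℝ f x) : ContinuousOn (deriv f) t :=
  continuousOn_of_antitoneOn_of_ordConnected_image (hf.antitoneOn_deriv hdiff)
    (hf.1.ordConnected.image_deriv hdiff)

theorem sub_le_mul_deriv_of_concaveOn {t : Set ℝ} {f : ℝ → ℝ} {x y : ℝ} (hf : ConcaveOn ℝ t f)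
    (hx : x ∈ t) (hy : y ∈ t) (hxy : x < y) (hdiff : DifferentiableAt ℝ f x) :
    f y - f x ≤ (y - x) * deriv f x := by
  have hslope : slope f x y ≤ deriv f x := hf.slope_le_deriv hx hy hxy hdiff
  rwa [slope_def_field, div_le_iff₀' (sub_pos.2 hxy)] at hslope

theorem strictMonoOn_of_convex_of_deriv_pos {t : Set ℝ} {f : ℝ → ℝ} (ht : Convex ℝ t)
    (hf' : ∀ x ∈ t, 0 < deriv f x) : StrictMonoOn f t :=
  strictMonoOn_of_deriv_pos ht
    (fun x hx ↦ (differentiableAt_of_deriv_ne_zero (hf' x hx).ne').continuousAt.continuousWithinAt)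
    fun x hx ↦ hf' x (interior_subset hx)

theorem lt_of_strictMonoOn_of_tendsto_nhdsGT {α β : Type*} [LinearOrder α] [DenselyOrdered α]
    [TopologicalSpace α] [OrderTopology α] [Preorder β] [TopologicalSpace β]
    [ClosedIicTopology β] {f : α → β} {a b x : α} {l : β}
    (hf : StrictMonoOn f (Ioo a b)) (hlim : Tendsto f (𝓝[>] a) (𝓝 l)) (hx : x ∈ Ioo a b) :
    l < f x := by
  obtain ⟨y, hay, hyx⟩ := exists_between hx.1
  have hy : y ∈ Ioo a b := ⟨hay, hyx.trans hx.2⟩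
  have : (𝓝[>] a).NeBot := nhdsGT_neBot_of_exists_gt ⟨y, hay⟩
  have hle : l ≤ f y := le_of_tendsto hlim <| by
    filter_upwards [Ioo_mem_nhdsGT hay] with z hz
    exact (hf ⟨hz.1, hz.2.trans hy.2⟩ hy hz.2).le
  exact hle.trans_lt (hf hy hx hyx)

/-- The left-hand side of the first-order condition `(b - d) s'(d) + k s(d)² - s(d) = 0`. For
`k = b = ρ` it is the numerator of the derivative of `-(1 - ρ s(d)) / (1 - d s(d))`. The two roles
of `ρ`, right endpoint and coefficient of `s²`, are independent in the argument, so they are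
separate parameters. -/
noncomputable def focResidual (k b : ℝ) (s : ℝ → ℝ) (d : ℝ) : ℝ :=
  (b - d) * deriv s d + k * s d ^ 2 - s d

section FocResidual

variable {a b c k : ℝ} {s : ℝ → ℝ}

theorem continuousOn_focResidual (hconc : ConcaveOn ℝ (Ioo a b) s)
    (hdiff : ∀ d ∈ Ioo a b, DifferentiableAt ℝ s d) :
    ContinuousOn (focResidual k b s) (Ioo a b) := by
  have hs : ContinuousOn s (Ioo a b) := fun d hd ↦ (hdiff d hd).continuousAt.continuousWithinAt
  have hs' : ContinuousOn (deriv s) (Ioo a b) := continuousOn_deriv_of_concaveOn hconc hdiff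
  unfold focResidual
  fun_prop

theorem strictAntiOn_focResidual (hconc : ConcaveOn ℝ (Ioo a b) s)
    (hs' : ∀ d ∈ Ioo a b, 0 < deriv s d) (hlt : ∀ d ∈ Ioo a b, k * s d < 1) :
    StrictAntiOn (focResidual k b s) (Ioo a b) := by
  intro x hx y hy hxy
  have hdiff : ∀ d ∈ Ioo a b, DifferentiableAt ℝ s d := fun d hd ↦
    differentiableAt_of_deriv_ne_zero (hs' d hd).ne'
  have hinc : 0 < s y - s x := sub_pos.2 (strictMonoOn_of_convex_of_deriv_pos hconc.1 hs' hx hy hxy)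
  have hderiv : (b - y) * deriv s y ≤ (b - y) * deriv s x :=
    mul_le_mul_of_nonneg_left (hconc.antitoneOn_deriv hdiff hx hy hxy.le) (sub_nonneg.2 hy.2.le)
  have htangent : s y - s x ≤ (y - x) * deriv s x :=
    sub_le_mul_deriv_of_concaveOn hconc hx hy hxy (hdiff x hx)
  have hdrop : 0 < (s y - s x) * (2 - k * (s x + s y)) :=
    mul_pos hinc (by linarith [hlt x hx, hlt y hy])
  unfold focResidual
  linarith

theorem eventually_focResidual_pos (hab : a < b) (hconc : ConcaveOn ℝ (Ioo a b) s)
    (hs' : ∀ d ∈ Ioo a b, 0 < deriv s d) (hlim : Tendsto s (𝓝[>] a) (𝓝 0)) :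
    ∀ᶠ d in 𝓝[>] a, 0 < focResidual k b s d := by
  obtain ⟨m, ham, hmb⟩ := exists_between hab
  have hm : m ∈ Ioo a b := ⟨ham, hmb⟩
  have hanti : AntitoneOn (deriv s) (Ioo a b) :=
    hconc.antitoneOn_deriv fun x hx ↦ differentiableAt_of_deriv_ne_zero (hs' x hx).ne'
  have hbound : Tendsto (fun d ↦ (b - m) * deriv s m + k * s d ^ 2 - s d) (𝓝[>] a)
      (𝓝 ((b - m) * deriv s m)) := by
    simpa using ((hlim.pow 2).const_mul k).const_add ((b - m) * deriv s m) |>.sub hlim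
  have hpos : 0 < (b - m) * deriv s m := mul_pos (sub_pos.2 hmb) (hs' m hm)
  filter_upwards [hbound.eventually_const_lt hpos, Ioo_mem_nhdsGT ham] with d hd hdm
  have hdI : d ∈ Ioo a b := ⟨hdm.1, hdm.2.trans hmb⟩
  have hderiv : deriv s m ≤ deriv s d := hanti hdI hm hdm.2.le
  have hprod : (b - m) * deriv s m ≤ (b - d) * deriv s d :=
    mul_le_mul (by linarith [hdm.2]) hderiv (hs' m hm).le (sub_nonneg.2 hdI.2.le)
  unfold focResidual
  linarith

theorem eventually_focResidual_neg (hab : a < b) (hconc : ConcaveOn ℝ (Ioo a b) s)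
    (hs' : ∀ d ∈ Ioo a b, 0 < deriv s d) (hpos : ∀ d ∈ Ioo a b, 0 < s d) (hc : c < 1)
    (hle : ∀ d ∈ Ioo a b, k * s d ≤ c) :
    ∀ᶠ d in 𝓝[<] b, focResidual k b s d < 0 := by
  obtain ⟨m, ham, hmb⟩ := exists_between hab
  have hm : m ∈ Ioo a b := ⟨ham, hmb⟩
  have hanti : AntitoneOn (deriv s) (Ioo a b) :=
    hconc.antitoneOn_deriv fun x hx ↦ differentiableAt_of_deriv_ne_zero (hs' x hx).ne'
  have hmono : StrictMonoOn s (Ioo a b) := strictMonoOn_of_convex_of_deriv_pos hconc.1 hs'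
  have hvanish : Tendsto (fun d ↦ (b - d) * deriv s m) (𝓝[<] b) (𝓝 0) := by
    have hcont : Continuous fun d ↦ (b - d) * deriv s m := by fun_prop
    simpa using (hcont.tendsto b).mono_left nhdsWithin_le_nhds
  have hgap : 0 < s m * (1 - c) := mul_pos (hpos m hm) (sub_pos.2 hc)
  filter_upwards [hvanish.eventually_lt_const hgap, Ioo_mem_nhdsLT hmb] with d hd hmd
  have hdI : d ∈ Ioo a b := ⟨ham.trans hmd.1, hmd.2⟩
  have hderiv : (b - d) * deriv s d ≤ (b - d) * deriv s m :=
    mul_le_mul_of_nonneg_left (hanti hm hdI hmd.1.le) (sub_nonneg.2 hmd.2.le)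
  have hlevel : s m * (1 - c) ≤ s d * (1 - k * s d) :=
    mul_le_mul (hmono hm hdI hmd.1).le (by linarith [hle d hdI]) (sub_nonneg.2 hc.le)
      (hpos d hdI).le
  unfold focResidual
  linarith

theorem exists_focResidual_eq_zero (hab : a < b) (hconc : ConcaveOn ℝ (Ioo a b) s)
    (hs' : ∀ d ∈ Ioo a b, 0 < deriv s d) (hlim : Tendsto s (𝓝[>] a) (𝓝 0)) (hc : c < 1)
    (hle : ∀ d ∈ Ioo a b, k * s d ≤ c) :
    ∃ d ∈ Ioo a b, focResidual k b s d = 0 := by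
  have hpos : ∀ d ∈ Ioo a b, 0 < s d := fun d hd ↦
    lt_of_strictMonoOn_of_tendsto_nhdsGT (strictMonoOn_of_convex_of_deriv_pos hconc.1 hs') hlim hd
  obtain ⟨p, hp_pos, hp⟩ :=
    ((eventually_focResidual_pos (k := k) hab hconc hs' hlim).and (Ioo_mem_nhdsGT hab)).exists
  obtain ⟨q, hq_neg, hq⟩ :=
    ((eventually_focResidual_neg hab hconc hs' hpos hc hle).and (Ioo_mem_nhdsLT hab)).exists
  exact isPreconnected_Ioo.intermediate_value hq hp
    (continuousOn_focResidual hconc fun d hd ↦ differentiableAt_of_deriv_ne_zero (hs' d hd).ne')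
    ⟨hq_neg.le, hp_pos.le⟩

theorem stmt_2_general (hab : a < b) (hconc : ConcaveOn ℝ (Ioo a b) s)
    (hs' : ∀ d ∈ Ioo a b, 0 < deriv s d) (hlim : Tendsto s (𝓝[>] a) (𝓝 0)) (hc : c < 1)
    (hle : ∀ d ∈ Ioo a b, k * s d ≤ c) :
    ∃! d : ℝ, d ∈ Ioo a b ∧ (b - d) * deriv s d + k * s d ^ 2 - s d = 0 := by
  have hanti : StrictAntiOn (focResidual k b s) (Ioo a b) :=
    strictAntiOn_focResidual hconc hs' fun d hd ↦ (hle d hd).trans_lt hc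
  obtain ⟨d, hd, hd_zero⟩ := exists_focResidual_eq_zero hab hconc hs' hlim hc hle
  exact ⟨d, ⟨hd, hd_zero⟩, fun y ⟨hy, hy_zero⟩ ↦ hanti.injOn hy hd (hy_zero.trans hd_zero.symm)⟩

end FocResidual

/-- For a demand function s which is continuous on [0,ρ], twice
continuously differentiable on (0,ρ), with s(0) = 0 and (for d ∈ (0,ρ))
0 < s(d) ≤ 1, s′(d) > 0, s″(d) < 0, there is a unique d* ∈ (0,ρ) with
(ρ − d*)·s′(d*) + ρ·s(d*)² − s(d*) = 0. -/
theorem stmt_2 (ρ : ℝ) (hρ0 : 0 < ρ) (hρ1 : ρ < 1) (s : ℝ → ℝ)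
    (hcont : ContinuousOn s (Icc 0 ρ))
    (hC2 : ContDiffOn ℝ 2 s (Ioo 0 ρ))
    (hs0 : s 0 = 0)
    (hpos : ∀ d ∈ Ioo (0:ℝ) ρ, 0 < s d)
    (hle1 : ∀ d ∈ Ioo (0:ℝ) ρ, s d ≤ 1)
    (hs' : ∀ d ∈ Ioo (0:ℝ) ρ, 0 < deriv s d)
    (hs'' : ∀ d ∈ Ioo (0:ℝ) ρ, deriv (deriv s) d < 0) :
    ∃! d : ℝ, d ∈ Ioo (0:ℝ) ρ ∧
      (ρ - d) * deriv s d + ρ * (s d) ^ 2 - s d = 0 := by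
  have hconc : ConcaveOn ℝ (Ioo 0 ρ) s :=
    (strictConcaveOn_of_deriv2_neg (convex_Ioo 0 ρ) (hcont.mono Ioo_subset_Icc_self)
      (by rw [interior_Ioo]; exact hs'')).concaveOn
  have hlim : Tendsto s (𝓝[>] 0) (𝓝 0) := by
    simpa only [ContinuousWithinAt, hs0] using
      ((continuousWithinAt_Icc_iff_Ici hρ0).1 (hcont 0 (left_mem_Icc.2 hρ0.le))).mono
        Ioi_subset_Ici_self
  exact stmt_2_general hρ0 hconc hs' hlim hρ1 fun d hd ↦
    mul_le_of_le_one_right hρ0.le (hle1 d hd)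
end

section
/- Let 0 < d < ρ < 1. Define x̄ = (ρ−d)/(2ρ − d − dρ), a = (1/2)·(1 − d·√((ρ−d²)/(ρd²))), b = ((ρ−d)·(d·√((ρ−d²)/(ρd²)) + d − 1))/(2ρ − ρd − d), c = ((ρ−d)²·(1 − 2d + ρ − (1−ρ)·√(1 − d²/ρ)))/(2(1−ρ)(2ρ − d − ρd)²), m = d/(2ρ(1−a)), n = (ρ − d + bρ)/(2ρ(1−a)). Define J : [0,1) → ℝ by J(x) = x + (a·x² + b·x + c)/(1−x) for 0 ≤ x < x̄ and J(x) = ((1−d)/(1−ρ))·x for x̄ ≤ x < 1. Then for every x ∈ [0,1): J(x) = sup_{y ∈ [x,1)} ( x − d·y + ρ·((1−y)/(1−x))·J(y) ). Moreover, for x ∈ [0, x̄) the supremum is attained at y = m·x + n, which satisfies x < m·x + n ≤ x̄, with m·x + n < x̄ whenever x < x̄; and for x ∈ [x̄,1) the supremum is attained at y = x. -/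
open Set

noncomputable def xbar (d ρ : ℝ) : ℝ := (ρ - d) / (2 * ρ - d - d * ρ)

noncomputable def aCoef (d ρ : ℝ) : ℝ :=
  (1 / 2) * (1 - d * Real.sqrt ((ρ - d ^ 2) / (ρ * d ^ 2)))

noncomputable def bCoef (d ρ : ℝ) : ℝ :=
  ((ρ - d) * (d * Real.sqrt ((ρ - d ^ 2) / (ρ * d ^ 2)) + d - 1)) /
    (2 * ρ - ρ * d - d)

noncomputable def cCoef (d ρ : ℝ) : ℝ :=
  ((ρ - d) ^ 2 * (1 - 2 * d + ρ - (1 - ρ) * Real.sqrt (1 - d ^ 2 / ρ))) /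
    (2 * (1 - ρ) * (2 * ρ - d - ρ * d) ^ 2)

noncomputable def mCoef (d ρ : ℝ) : ℝ := d / (2 * ρ * (1 - aCoef d ρ))

noncomputable def nCoef (d ρ : ℝ) : ℝ := (ρ - d + bCoef d ρ * ρ) / (2 * ρ * (1 - aCoef d ρ))

/-- The value function of Theorem 2 (uniform income distribution). -/
noncomputable def Jval (d ρ : ℝ) (x : ℝ) : ℝ :=
  if x < xbar d ρ then
    x + (aCoef d ρ * x ^ 2 + bCoef d ρ * x + cCoef d ρ) / (1 - x)
  else ((1 - d) / (1 - ρ)) * x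

/-!
Put `V x = (1 - x) * J x`. The Bellman equation becomes
`V x = max_{y ≥ x} ((1 - x) * (x - d * y) + ρ * V y)`, free of division. Above `x̄`, `V` is the
parabola `A * x * (1 - x)` with `A = (1 - d) / (1 - ρ)`; below `x̄` it is the parabola `Q` with the
same value and slope at `x̄` but smaller curvature, so that `V ≤ Q` everywhere. Completing the
square in `y` gives
`(1 - x) * (x - d * y) + ρ * Q y = Q x - ρ * (1 - a) * (y - (m * x + n)) ^ 2`,
which settles the case `x < x̄` for all `y` at once. For `x ≥ x̄` the objective is, on `y ≥ x`, a
concave parabola whose slope at `y = x` is nonpositive.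
-/

/-- The lender's payoff in the Bellman equation with continuation value `J`: the lower bound on
income is `x` and the repayment asked for is `y`. -/
noncomputable def bellmanObjective (d ρ : ℝ) (J : ℝ → ℝ) (x y : ℝ) : ℝ :=
  x - d * y + ρ * ((1 - y) / (1 - x)) * J y

/-- The candidate optimal repayment `m * x + n` below the threshold `x̄`. -/
noncomputable def repaymentPolicy (d ρ x : ℝ) : ℝ := mCoef d ρ * x + nCoef d ρ

/-- The square root `s` through which all of `a`, `b`, `c`, `m` and `n` are expressed; it is
`1 - 2 * a`. -/
noncomputable def coefRoot (d ρ : ℝ) : ℝ := √(1 - d ^ 2 / ρ)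

/-- The value per unit of income of asking for the repayment `y = x` forever, the slope of `J`
above the threshold `x̄`. -/
noncomputable def stationaryRate (d ρ : ℝ) : ℝ := (1 - d) / (1 - ρ)

/-- The quadratic that `(1 - x) * J x` equals below the threshold `x̄`, written as its Taylor
expansion at `x̄`, where it is tangent to `stationaryRate d ρ * x * (1 - x)`. -/
noncomputable def weightedQuadratic (d ρ x : ℝ) : ℝ :=
  stationaryRate d ρ * xbar d ρ * (1 - xbar d ρ)
    + stationaryRate d ρ * (1 - 2 * xbar d ρ) * (x - xbar d ρ)
    - (1 + coefRoot d ρ) / 2 * (x - xbar d ρ) ^ 2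

theorem one_sub_mul_bellmanObjective (d ρ : ℝ) (J : ℝ → ℝ) {x : ℝ} (hx : x ≠ 1) (y : ℝ) :
    (1 - x) * bellmanObjective d ρ J x y = (1 - x) * (x - d * y) + ρ * ((1 - y) * J y) := by
  have hx' : 1 - x ≠ 0 := sub_ne_zero.mpr hx.symm
  unfold bellmanObjective
  field_simp

section Coefficients

variable {d ρ : ℝ}

theorem coefRoot_nonneg (d ρ : ℝ) : 0 ≤ coefRoot d ρ := Real.sqrt_nonneg _

theorem coefRoot_le_one (hρ : 0 ≤ ρ) : coefRoot d ρ ≤ 1 :=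
  Real.sqrt_le_one.mpr (sub_le_self 1 (by positivity))

theorem mul_coefRoot_sq (hρ : 0 < ρ) (hdρ : d ^ 2 ≤ ρ) : ρ * coefRoot d ρ ^ 2 = ρ - d ^ 2 := by
  have hnonneg : 0 ≤ 1 - d ^ 2 / ρ := sub_nonneg.mpr ((div_le_one hρ).mpr hdρ)
  rw [coefRoot, Real.sq_sqrt hnonneg]
  field_simp

theorem mul_sqrt_eq_coefRoot (hd : 0 < d) (hρ : ρ ≠ 0) :
    d * √((ρ - d ^ 2) / (ρ * d ^ 2)) = coefRoot d ρ := by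
  calc d * √((ρ - d ^ 2) / (ρ * d ^ 2))
      = √(d ^ 2 * ((ρ - d ^ 2) / (ρ * d ^ 2))) := by
        rw [Real.sqrt_mul (sq_nonneg d), Real.sqrt_sq hd.le]
    _ = coefRoot d ρ := by
        rw [coefRoot]
        congr 1
        field_simp

theorem aCoef_eq (hd : 0 < d) (hρ : ρ ≠ 0) : aCoef d ρ = (1 - coefRoot d ρ) / 2 := by
  rw [aCoef, mul_sqrt_eq_coefRoot hd hρ]
  ring

theorem bCoef_eq (hd : 0 < d) (hρ : ρ ≠ 0) :
    bCoef d ρ = xbar d ρ * (coefRoot d ρ + d - 1) := by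
  rw [bCoef, xbar, mul_sqrt_eq_coefRoot hd hρ, mul_comm ρ d, sub_right_comm, div_mul_eq_mul_div]

theorem cCoef_eq (hρ : ρ ≠ 1) :
    cCoef d ρ = xbar d ρ ^ 2 * (stationaryRate d ρ - (1 + coefRoot d ρ) / 2) := by
  have hρ' : 1 - ρ ≠ 0 := sub_ne_zero.mpr hρ.symm
  have hrate : stationaryRate d ρ - (1 + coefRoot d ρ) / 2
      = (1 - 2 * d + ρ - (1 - ρ) * coefRoot d ρ) / (2 * (1 - ρ)) := by
    rw [stationaryRate]
    field_simp
    ring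
  rw [hrate, cCoef, xbar, mul_comm ρ d, ← coefRoot, div_pow, div_mul_div_comm,
    mul_comm (2 * (1 - ρ))]

theorem mCoef_eq (hd : 0 < d) (hρ : ρ ≠ 0) : mCoef d ρ = d / (ρ * (1 + coefRoot d ρ)) := by
  rw [mCoef, aCoef_eq hd hρ]
  ring_nf

theorem mCoef_pos (hd : 0 < d) (hρ : 0 < ρ) : 0 < mCoef d ρ := by
  have hs := coefRoot_nonneg d ρ
  rw [mCoef_eq hd hρ.ne']
  positivity

theorem mCoef_lt_one (hd : 0 < d) (hdρ : d < ρ) : mCoef d ρ < 1 := by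
  have hρ : 0 < ρ := hd.trans hdρ
  have hs := coefRoot_nonneg d ρ
  rw [mCoef_eq hd hρ.ne', div_lt_one (by positivity)]
  exact hdρ.trans_le (le_mul_of_one_le_right hρ.le (by linarith))

theorem mCoef_mul_mul_one_add_coefRoot (hd : 0 < d) (hρ : ρ ≠ 0) :
    mCoef d ρ * (ρ * (1 + coefRoot d ρ)) = d := by
  have hs : 1 + coefRoot d ρ ≠ 0 := by linarith [coefRoot_nonneg d ρ]
  rw [mCoef_eq hd hρ, div_mul_cancel₀ _ (mul_ne_zero hρ hs)]

theorem mCoef_mul_self (hd : 0 < d) (hρ : 0 < ρ) (hdρ : d ^ 2 ≤ ρ) :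
    mCoef d ρ * d = 1 - coefRoot d ρ := by
  have hs : 0 < 1 + coefRoot d ρ := by linarith [coefRoot_nonneg d ρ]
  rw [mCoef_eq hd hρ.ne', div_mul_eq_mul_div, div_eq_iff (by positivity)]
  linear_combination mul_coefRoot_sq hρ hdρ

end Coefficients

section Threshold

variable {d ρ : ℝ}

theorem stationaryRate_mul_one_sub (d : ℝ) (hρ : ρ ≠ 1) :
    stationaryRate d ρ * (1 - ρ) = 1 - d :=
  div_mul_cancel₀ _ (sub_ne_zero.mpr hρ.symm)

theorem one_lt_stationaryRate (hdρ : d < ρ) (hρ : ρ < 1) : 1 < stationaryRate d ρ :=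
  (one_lt_div (sub_pos.mpr hρ)).mpr (by linarith)

theorem xbar_denom_pos (hd : 0 < d) (hdρ : d < ρ) (hρ : ρ < 1) : 0 < 2 * ρ - d - d * ρ := by
  nlinarith

theorem xbar_lt_one (hd : 0 < d) (hdρ : d < ρ) (hρ : ρ < 1) : xbar d ρ < 1 := by
  rw [xbar, div_lt_one (xbar_denom_pos hd hdρ hρ)]
  nlinarith

theorem xbar_mul_denom (hd : 0 < d) (hdρ : d < ρ) (hρ : ρ < 1) :
    xbar d ρ * (2 * ρ - d - d * ρ) = ρ - d :=
  div_mul_cancel₀ _ (xbar_denom_pos hd hdρ hρ).ne'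

theorem stationaryRate_mul_one_sub_two_mul_xbar (hd : 0 < d) (hdρ : d < ρ) (hρ : ρ < 1) :
    stationaryRate d ρ * (1 - 2 * xbar d ρ) = 1 - (2 - d) * xbar d ρ := by
  rw [stationaryRate, div_mul_eq_mul_div, div_eq_iff (sub_pos.mpr hρ).ne']
  linear_combination -xbar_mul_denom hd hdρ hρ

/-- First-order condition for `y = x̄` at `x = x̄`; it determines `x̄`. -/
theorem mul_stationaryRate_mul_one_sub_two_mul_xbar (hd : 0 < d) (hdρ : d < ρ) (hρ : ρ < 1) :
    ρ * (stationaryRate d ρ * (1 - 2 * xbar d ρ)) = d * (1 - xbar d ρ) := by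
  rw [stationaryRate_mul_one_sub_two_mul_xbar hd hdρ hρ]
  linear_combination -xbar_mul_denom hd hdρ hρ

theorem nCoef_eq (hd : 0 < d) (hdρ : d < ρ) (hρ : ρ < 1) :
    nCoef d ρ = (1 - mCoef d ρ) * xbar d ρ := by
  have hρ0 : ρ ≠ 0 := (hd.trans hdρ).ne'
  have hs : 1 + coefRoot d ρ ≠ 0 := by linarith [coefRoot_nonneg d ρ]
  have hdenom : 2 * ρ * (1 - aCoef d ρ) = ρ * (1 + coefRoot d ρ) := by
    rw [aCoef_eq hd hρ0]
    ring
  rw [nCoef, hdenom, bCoef_eq hd hρ0, div_eq_iff (mul_ne_zero hρ0 hs)]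
  linear_combination xbar d ρ * mCoef_mul_mul_one_add_coefRoot hd hρ0 - xbar_mul_denom hd hdρ hρ

theorem repaymentPolicy_eq (hd : 0 < d) (hdρ : d < ρ) (hρ : ρ < 1) (x : ℝ) :
    repaymentPolicy d ρ x = xbar d ρ + mCoef d ρ * (x - xbar d ρ) := by
  rw [repaymentPolicy, nCoef_eq hd hdρ hρ]
  ring

theorem lt_repaymentPolicy (hd : 0 < d) (hdρ : d < ρ) (hρ : ρ < 1) {x : ℝ}
    (hx : x < xbar d ρ) : x < repaymentPolicy d ρ x := by
  rw [repaymentPolicy_eq hd hdρ hρ]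
  nlinarith [mCoef_lt_one hd hdρ]

theorem repaymentPolicy_lt_xbar (hd : 0 < d) (hdρ : d < ρ) (hρ : ρ < 1) {x : ℝ}
    (hx : x < xbar d ρ) : repaymentPolicy d ρ x < xbar d ρ := by
  rw [repaymentPolicy_eq hd hdρ hρ]
  nlinarith [mCoef_pos hd (hd.trans hdρ)]

end Threshold

section ValueFunction

variable {d ρ x : ℝ}

theorem Jval_of_xbar_le (hx : xbar d ρ ≤ x) : Jval d ρ x = stationaryRate d ρ * x :=
  if_neg hx.not_gt

theorem one_sub_mul_Jval_of_lt_xbar (hd : 0 < d) (hdρ : d < ρ) (hρ : ρ < 1)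
    (hx : x < xbar d ρ) : (1 - x) * Jval d ρ x = weightedQuadratic d ρ x := by
  have hρ0 : ρ ≠ 0 := (hd.trans hdρ).ne'
  have hx1 : 1 - x ≠ 0 := (sub_pos.mpr (hx.trans (xbar_lt_one hd hdρ hρ))).ne'
  rw [Jval, if_pos hx, mul_add, mul_div_cancel₀ _ hx1, aCoef_eq hd hρ0, bCoef_eq hd hρ0,
    cCoef_eq hρ.ne, weightedQuadratic]
  linear_combination -x * stationaryRate_mul_one_sub_two_mul_xbar hd hdρ hρ

theorem one_sub_mul_Jval_le_weightedQuadratic (hd : 0 < d) (hdρ : d < ρ) (hρ : ρ < 1) (x : ℝ) :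
    (1 - x) * Jval d ρ x ≤ weightedQuadratic d ρ x := by
  rcases lt_or_ge x (xbar d ρ) with hx | hx
  · exact (one_sub_mul_Jval_of_lt_xbar hd hdρ hρ hx).le
  · have hcurv : (1 + coefRoot d ρ) / 2 ≤ stationaryRate d ρ := by
      linarith [coefRoot_le_one (d := d) (hd.trans hdρ).le, one_lt_stationaryRate hdρ hρ]
    have hgap : (1 - x) * Jval d ρ x = weightedQuadratic d ρ x
        - (stationaryRate d ρ - (1 + coefRoot d ρ) / 2) * (x - xbar d ρ) ^ 2 := by
      rw [Jval_of_xbar_le hx, weightedQuadratic]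
      ring
    rw [hgap]
    exact sub_le_self _ (mul_nonneg (sub_nonneg.mpr hcurv) (sq_nonneg _))

theorem weightedQuadratic_bellman (hd : 0 < d) (hdρ : d < ρ) (hρ : ρ < 1) (x y : ℝ) :
    (1 - x) * (x - d * y) + ρ * weightedQuadratic d ρ y = weightedQuadratic d ρ x
      - ρ * ((1 + coefRoot d ρ) / 2) * (y - repaymentPolicy d ρ x) ^ 2 := by
  have hρ0 : 0 < ρ := hd.trans hdρ
  rw [repaymentPolicy_eq hd hdρ hρ, weightedQuadratic, weightedQuadratic]
  linear_combination
    -(1 - xbar d ρ) * xbar d ρ * stationaryRate_mul_one_sub d hρ.ne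
    + (y - xbar d ρ) * mul_stationaryRate_mul_one_sub_two_mul_xbar hd hdρ hρ
    - (x - xbar d ρ) * stationaryRate_mul_one_sub_two_mul_xbar hd hdρ hρ
    + ((x - xbar d ρ) ^ 2 * mCoef d ρ / 2 - (x - xbar d ρ) * (y - xbar d ρ))
      * mCoef_mul_mul_one_add_coefRoot hd hρ0.ne'
    + (x - xbar d ρ) ^ 2 / 2 * mCoef_mul_self hd hρ0 (by nlinarith)

end ValueFunction

section BellmanEquation

variable {d ρ x y : ℝ}

theorem bellmanObjective_repaymentPolicy (hd : 0 < d) (hdρ : d < ρ) (hρ : ρ < 1)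
    (hx : x < xbar d ρ) :
    bellmanObjective d ρ (Jval d ρ) x (repaymentPolicy d ρ x) = Jval d ρ x := by
  have hx1 : x < 1 := hx.trans (xbar_lt_one hd hdρ hρ)
  apply mul_left_cancel₀ (sub_pos.mpr hx1).ne'
  rw [one_sub_mul_bellmanObjective d ρ _ hx1.ne,
    one_sub_mul_Jval_of_lt_xbar hd hdρ hρ (repaymentPolicy_lt_xbar hd hdρ hρ hx),
    one_sub_mul_Jval_of_lt_xbar hd hdρ hρ hx, weightedQuadratic_bellman hd hdρ hρ]
  ring

theorem bellmanObjective_le_of_lt_xbar (hd : 0 < d) (hdρ : d < ρ) (hρ : ρ < 1)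
    (hx : x < xbar d ρ) (y : ℝ) : bellmanObjective d ρ (Jval d ρ) x y ≤ Jval d ρ x := by
  have hρ0 : 0 < ρ := hd.trans hdρ
  have hs := coefRoot_nonneg d ρ
  have hx1 : x < 1 := hx.trans (xbar_lt_one hd hdρ hρ)
  refine le_of_mul_le_mul_left ?_ (sub_pos.mpr hx1)
  calc (1 - x) * bellmanObjective d ρ (Jval d ρ) x y
      = (1 - x) * (x - d * y) + ρ * ((1 - y) * Jval d ρ y) :=
        one_sub_mul_bellmanObjective d ρ _ hx1.ne y
    _ ≤ (1 - x) * (x - d * y) + ρ * weightedQuadratic d ρ y := by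
        gcongr
        exact one_sub_mul_Jval_le_weightedQuadratic hd hdρ hρ y
    _ = weightedQuadratic d ρ x
          - ρ * ((1 + coefRoot d ρ) / 2) * (y - repaymentPolicy d ρ x) ^ 2 :=
        weightedQuadratic_bellman hd hdρ hρ x y
    _ ≤ weightedQuadratic d ρ x := sub_le_self _ (by positivity)
    _ = (1 - x) * Jval d ρ x := (one_sub_mul_Jval_of_lt_xbar hd hdρ hρ hx).symm

theorem bellmanObjective_self (hρ : ρ ≠ 1) (hx : xbar d ρ ≤ x) (hx1 : x ≠ 1) :
    bellmanObjective d ρ (Jval d ρ) x x = Jval d ρ x := by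
  rw [bellmanObjective, div_self (sub_ne_zero.mpr hx1.symm), Jval_of_xbar_le hx]
  linear_combination -x * stationaryRate_mul_one_sub d hρ

theorem bellmanObjective_le_of_xbar_le (hd : 0 < d) (hdρ : d < ρ) (hρ : ρ < 1)
    (hx : xbar d ρ ≤ x) (hx1 : x < 1) (hxy : x ≤ y) :
    bellmanObjective d ρ (Jval d ρ) x y ≤ Jval d ρ x := by
  have hρ0 : 0 < ρ := hd.trans hdρ
  have hrate : 1 < stationaryRate d ρ := one_lt_stationaryRate hdρ hρ
  have hslope : 0 ≤ 2 * ρ * stationaryRate d ρ - d := by nlinarith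
  have hexpand : (1 - x) * (x - d * y) + ρ * ((1 - y) * (stationaryRate d ρ * y))
      = (1 - x) * (stationaryRate d ρ * x)
        - ((2 * ρ * stationaryRate d ρ - d) * (x - xbar d ρ) * (y - x)
          + ρ * stationaryRate d ρ * (y - x) ^ 2) := by
    linear_combination -(1 - x) * x * stationaryRate_mul_one_sub d hρ.ne
      + (y - x) * mul_stationaryRate_mul_one_sub_two_mul_xbar hd hdρ hρ
  refine le_of_mul_le_mul_left ?_ (sub_pos.mpr hx1)
  rw [one_sub_mul_bellmanObjective d ρ _ hx1.ne, Jval_of_xbar_le hx,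
    Jval_of_xbar_le (hx.trans hxy), hexpand]
  have hlinear := mul_nonneg (mul_nonneg hslope (sub_nonneg.mpr hx)) (sub_nonneg.mpr hxy)
  exact sub_le_self _ (add_nonneg hlinear (by positivity))

theorem isGreatest_bellmanObjective (hd : 0 < d) (hdρ : d < ρ) (hρ : ρ < 1) (hx1 : x < 1) :
    IsGreatest (bellmanObjective d ρ (Jval d ρ) x '' Ico x 1) (Jval d ρ x) := by
  rcases lt_or_ge x (xbar d ρ) with hx | hx
  · have hpolicy : repaymentPolicy d ρ x ∈ Ico x 1 :=
      ⟨(lt_repaymentPolicy hd hdρ hρ hx).le,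
        (repaymentPolicy_lt_xbar hd hdρ hρ hx).trans (xbar_lt_one hd hdρ hρ)⟩
    exact ⟨⟨_, hpolicy, bellmanObjective_repaymentPolicy hd hdρ hρ hx⟩,
      forall_mem_image.mpr fun y _ => bellmanObjective_le_of_lt_xbar hd hdρ hρ hx y⟩
  · exact ⟨⟨x, left_mem_Ico.mpr hx1, bellmanObjective_self hρ.ne hx hx1.ne⟩,
      forall_mem_image.mpr fun _ hy => bellmanObjective_le_of_xbar_le hd hdρ hρ hx hx1 hy.1⟩

end BellmanEquation

/-- For uniform income on [0,1], the explicitly given J solves the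
Bellman equation J(x) = sup_{y∈[x,1)} ( x − d·y + ρ·((1−y)/(1−x))·J(y) ) for all
x ∈ [0,1); for x ∈ [0,x̄) the supremum is attained at y = m·x + n ∈ (x, x̄), and
for x ∈ [x̄,1) it is attained at y = x. -/
theorem stmt_6 (d ρ : ℝ) (hd : 0 < d) (hdρ : d < ρ) (hρ : ρ < 1) :
    (∀ x ∈ Ico (0:ℝ) 1,
      IsLUB ((fun y => x - d * y + ρ * ((1 - y) / (1 - x)) * Jval d ρ y) '' Ico x 1)
        (Jval d ρ x)) ∧
    (∀ x ∈ Ico (0:ℝ) (xbar d ρ),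
      x - d * (mCoef d ρ * x + nCoef d ρ) +
          ρ * ((1 - (mCoef d ρ * x + nCoef d ρ)) / (1 - x)) *
            Jval d ρ (mCoef d ρ * x + nCoef d ρ) = Jval d ρ x ∧
      x < mCoef d ρ * x + nCoef d ρ ∧ mCoef d ρ * x + nCoef d ρ < xbar d ρ) ∧
    (∀ x ∈ Ico (xbar d ρ) 1,
      x - d * x + ρ * ((1 - x) / (1 - x)) * Jval d ρ x = Jval d ρ x) := by
  exact ⟨fun x hx => (isGreatest_bellmanObjective hd hdρ hρ hx.2).isLUB,
    fun x hx => ⟨bellmanObjective_repaymentPolicy hd hdρ hρ hx.2,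
      lt_repaymentPolicy hd hdρ hρ hx.2, repaymentPolicy_lt_xbar hd hdρ hρ hx.2⟩,
    fun x hx => bellmanObjective_self hρ.ne hx.1 hx.2.ne⟩
end

section
/- Let 0 < d < ρ < 1, m ∈ (0,1) and n > 0. Define y_k = n·Σ_{i=0}^{k} m^i for k ∈ ℕ and Π_k = Σ_{i=0}^{k−1} ρ^i·(ρ−d)·y_i − ρ^k·d·y_k. Then: (i) for every k, Π_{k+1} − Π_k = ρ^{k+1}·(y_k − d·y_{k+1}); (ii) the sequence k ↦ y_k − d·y_{k+1} is strictly increasing; (iii) if Π_{k*} ≥ 0 for some k* ∈ ℕ, then Π_{k+1} > Π_k for every k ≥ k*. -/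
open Finset

/-!
The increments `Π (k + 1) - Π k` carry the sign of the nondecreasing sequence
`k ↦ y k - d * y (k + 1)`, so once `Π` has risen it keeps rising. Since `Π 0 = -(d * y 0) < 0`,
a nonnegative `Π kstar` forces a rise at some index before `kstar`.
-/

section Sequences

theorem exists_lt_succ_of_lt {α : Type*} [LinearOrder α] {u : ℕ → α} {a b : ℕ} (hab : a ≤ b)
    (h : u a < u b) : ∃ i ∈ Set.Ico a b, u i < u (i + 1) := by
  by_contra! hle
  have hanti : AntitoneOn u (Set.Icc a b) :=
    antitoneOn_of_succ_le Set.ordConnected_Icc fun i _ hi hi' ↦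
      hle i ⟨hi.1, Nat.lt_of_succ_le hi'.2⟩
  exact h.not_ge (hanti (Set.left_mem_Icc.2 hab) (Set.right_mem_Icc.2 hab) hab)

variable {R : Type*} [Ring R] [LinearOrder R] [IsStrictOrderedRing R]

theorem lt_iff_pos_of_sub_eq_mul {a b v w : R} (hw : 0 < w) (h : b - a = w * v) :
    a < b ↔ 0 < v := by
  rw [← sub_pos, h, mul_pos_iff_of_pos_left hw]

theorem lt_succ_of_lt_of_sub_eq_mul {u v w : ℕ → R} (hw : ∀ k, 0 < w k) (hv : Monotone v)
    (hu : ∀ k, u (k + 1) - u k = w k * v k) {a b k : ℕ} (hab : a ≤ b) (h : u a < u b)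
    (hbk : b ≤ k) : u k < u (k + 1) := by
  obtain ⟨i, hi, hrise⟩ := exists_lt_succ_of_lt hab h
  have hvi : 0 < v i := (lt_iff_pos_of_sub_eq_mul (hw i) (hu i)).1 hrise
  have hik : i ≤ k := hi.2.le.trans hbk
  exact (lt_iff_pos_of_sub_eq_mul (hw k) (hu k)).2 (hvi.trans_le (hv hik))

end Sequences

/-- The repayment amounts `y k` of the linear control with slope `m` and intercept `n`, i.e. the
solution of `y 0 = n`, `y (k + 1) = m * y k + n`, in closed form. -/
def repayment {R : Type*} [CommSemiring R] (m n : R) (k : ℕ) : R :=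
  n * ∑ i ∈ range (k + 1), m ^ i

theorem repayment_zero {R : Type*} [CommSemiring R] (m n : R) : repayment m n 0 = n := by
  simp [repayment]

theorem repayment_succ {R : Type*} [CommSemiring R] (m n : R) (k : ℕ) :
    repayment m n (k + 1) = repayment m n k + n * m ^ (k + 1) := by
  rw [repayment, sum_range_succ, mul_add, repayment]

/-- The lender's net present value `Π k` from a consumer of type `k`, who repays in the periods
`0, …, k - 1` and defaults in period `k`, for discount factor `ρ`, repayment discount factor `d`
and an arbitrary schedule `y` of repayment amounts. -/
def lenderNPV {R : Type*} [Ring R] (ρ d : R) (y : ℕ → R) (k : ℕ) : R :=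
  (∑ i ∈ range k, ρ ^ i * (ρ - d) * y i) - ρ ^ k * d * y k

theorem lenderNPV_zero {R : Type*} [Ring R] (ρ d : R) (y : ℕ → R) :
    lenderNPV ρ d y 0 = -(d * y 0) := by
  simp [lenderNPV]

theorem lenderNPV_succ_sub {R : Type*} [CommRing R] (ρ d : R) (y : ℕ → R) (k : ℕ) :
    lenderNPV ρ d y (k + 1) - lenderNPV ρ d y k = ρ ^ (k + 1) * (y k - d * y (k + 1)) := by
  rw [lenderNPV, lenderNPV, sum_range_succ]
  ring

section Order

variable {R : Type*} [CommRing R] [LinearOrder R] [IsStrictOrderedRing R] {d ρ m n : R}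

theorem strictMono_repayment_sub_mul_succ (hm : 0 < m) (hdm : d * m < 1) (hn : 0 < n) :
    StrictMono fun k ↦ repayment m n k - d * repayment m n (k + 1) := by
  refine strictMono_nat_of_lt_succ fun k ↦ sub_pos.1 ?_
  have hstep : repayment m n (k + 1) - d * repayment m n (k + 1 + 1) -
      (repayment m n k - d * repayment m n (k + 1)) = n * m ^ (k + 1) * (1 - d * m) := by
    rw [repayment_succ m n (k + 1), repayment_succ m n k]
    ring
  rw [hstep]
  exact mul_pos (mul_pos hn (pow_pos hm _)) (sub_pos.2 hdm)

theorem lenderNPV_lt_succ_of_nonneg {y : ℕ → R} (hd : 0 < d) (hρ : 0 < ρ) (hy : 0 < y 0)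
    (hmono : Monotone fun k ↦ y k - d * y (k + 1)) {j k : ℕ} (hj : 0 ≤ lenderNPV ρ d y j)
    (hjk : j ≤ k) : lenderNPV ρ d y k < lenderNPV ρ d y (k + 1) := by
  have hzero : lenderNPV ρ d y 0 < 0 := by
    rw [lenderNPV_zero]
    exact neg_neg_of_pos (mul_pos hd hy)
  exact lt_succ_of_lt_of_sub_eq_mul (fun i ↦ pow_pos hρ (i + 1)) hmono (lenderNPV_succ_sub ρ d y)
    j.zero_le (hzero.trans_le hj) hjk

theorem stmt_7_general (hd : 0 < d) (hρ : 0 < ρ) (hm : 0 < m) (hdm : d * m < 1) (hn : 0 < n)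
    {y : ℕ → R} (hy : ∀ k, y k = n * ∑ i ∈ range (k + 1), m ^ i) {Pi : ℕ → R}
    (hPi : ∀ k, Pi k = (∑ i ∈ range k, ρ ^ i * (ρ - d) * y i) - ρ ^ k * d * y k) :
    (∀ k, Pi (k + 1) - Pi k = ρ ^ (k + 1) * (y k - d * y (k + 1))) ∧
    StrictMono (fun k => y k - d * y (k + 1)) ∧
    (∀ kstar : ℕ, 0 ≤ Pi kstar → ∀ k, kstar ≤ k → Pi k < Pi (k + 1)) := by
  obtain rfl : y = repayment m n := funext hy
  obtain rfl : Pi = lenderNPV ρ d (repayment m n) := funext hPi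
  have hmono := strictMono_repayment_sub_mul_succ hm hdm hn
  have hinit : 0 < repayment m n 0 := by rwa [repayment_zero]
  exact ⟨lenderNPV_succ_sub ρ d _, hmono, fun _ hkstar _ hk ↦
    lenderNPV_lt_succ_of_nonneg hd hρ hinit hmono.monotone hkstar hk⟩

end Order

/-- For the linear-control repayment sequence y_k = n·Σ_{i=0}^k m^i
with m ∈ (0,1), n > 0, 0 < d < ρ < 1, and consumer-type NPVs
Pi_k = Σ_{i<k} ρ^i(ρ−d)y_i − ρ^k d y_k:
(i) Pi_{k+1} − Pi_k = ρ^{k+1}(y_k − d y_{k+1});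
(ii) k ↦ y_k − d y_{k+1} is strictly increasing;
(iii) if Pi_{k*} ≥ 0 then Pi_{k+1} > Pi_k for all k ≥ k*. -/
theorem stmt_7 (d ρ m n : ℝ) (hd : 0 < d) (hdρ : d < ρ) (hρ : ρ < 1)
    (hm0 : 0 < m) (hm1 : m < 1) (hn : 0 < n)
    (y : ℕ → ℝ) (hy : ∀ k, y k = n * ∑ i ∈ range (k + 1), m ^ i)
    (Pi : ℕ → ℝ)
    (hPi : ∀ k, Pi k = (∑ i ∈ range k, ρ ^ i * (ρ - d) * y i) - ρ ^ k * d * y k) :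
    (∀ k, Pi (k + 1) - Pi k = ρ ^ (k + 1) * (y k - d * y (k + 1))) ∧
    StrictMono (fun k => y k - d * y (k + 1)) ∧
    (∀ kstar : ℕ, 0 ≤ Pi kstar → ∀ k, kstar ≤ k → Pi k < Pi (k + 1)) :=
  stmt_7_general hd (hd.trans hdρ) hm0
    (mul_lt_one_of_nonneg_of_lt_one_left hd.le (hdρ.trans hρ) hm1.le) hn hy hPi
end

section
/- Let a > 0 and b > 0, and define f(x) = (b^a/Γ(a))·x^{a−1}·e^{−b·x} for x > 0, and G(x) = x·f(x)/∫_x^∞ f(t) dt for x > 0. Then G is strictly increasing on (0,∞), G(x) → 0 as x → 0⁺, and G(x) → ∞ as x → ∞ (so the Gamma distribution satisfies Assumption 1). -/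
open Set Filter MeasureTheory

/-!
Substituting `t = x * s` gives `1 / G x = ∫ s in (1, ∞), f (x * s) / f x`. For the Gamma density
the integrand is `s ^ (a - 1) * exp (-(b * (s - 1) * x))`, which for every `s > 1` is strictly
decreasing in `x` and tends to `0` as `x → ∞`; integrating, so does `1 / G`. Near `0`, the
numerator `x * f x` of `G x` is of order `x ^ a`, while the denominator tends to `∫ f = 1`.
-/

open ProbabilityTheory Topology

section SetIntegral

variable {X : Type*} [MeasurableSpace X] {μ : Measure X} {s : Set X} {g h : X → ℝ}

lemma setIntegral_pos_of_forall_pos (hs : MeasurableSet s) (hμs : μ s ≠ 0)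
    (hg : IntegrableOn g s μ) (hpos : ∀ x ∈ s, 0 < g x) : 0 < ∫ x in s, g x ∂μ := by
  have hsupport : Function.support g ∩ s = s :=
    inter_eq_right.2 fun x hx => (hpos x hx).ne'
  rw [setIntegral_pos_iff_support_of_nonneg_ae
    (ae_restrict_of_forall_mem hs fun x hx => (hpos x hx).le) hg, hsupport]
  exact hμs.bot_lt

lemma setIntegral_lt_setIntegral_of_forall_lt (hs : MeasurableSet s) (hμs : μ s ≠ 0)
    (hg : IntegrableOn g s μ) (hh : IntegrableOn h s μ) (hlt : ∀ x ∈ s, g x < h x) :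
    ∫ x in s, g x ∂μ < ∫ x in s, h x ∂μ := by
  rw [← sub_pos, ← integral_sub hh hg]
  exact setIntegral_pos_of_forall_pos hs hμs (hh.sub hg) fun x hx => sub_pos.2 (hlt x hx)

end SetIntegral

lemma tendsto_setIntegral_Ioi_nhdsGT {E : Type*} [NormedAddCommGroup E] [NormedSpace ℝ E]
    {μ : Measure ℝ} {f : ℝ → E} {c : ℝ} (hf : IntegrableOn f (Ioi c) μ) :
    Tendsto (fun x => ∫ t in Ioi x, f t ∂μ) (𝓝[>] c) (𝓝 (∫ t in Ioi c, f t ∂μ)) := by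
  have hcover : AECover (μ.restrict (Ioi c)) (𝓝[>] c) Ioi :=
    aecover_Ioi_of_Ioi nhdsWithin_le_nhds
  refine (hcover.integral_tendsto_of_countably_generated hf).congr' ?_
  filter_upwards [self_mem_nhdsWithin] with x hx
  rw [Measure.restrict_restrict_of_subset (Ioi_subset_Ioi (le_of_lt hx))]

/-- The generalized failure rate `x f(x) / (1 - F(x))` of a density `f` with distribution function
`F`, with the tail `1 - F(x)` written as `∫_x^∞ f`. It is only meaningful where that tail is finite
and nonzero. -/
noncomputable def generalizedFailureRate (f : ℝ → ℝ) (x : ℝ) : ℝ :=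
  x * f x / ∫ t in Ioi x, f t

section GeneralizedFailureRate

variable {f : ℝ → ℝ}

lemma inv_generalizedFailureRate {x : ℝ} (hx : 0 < x) :
    (generalizedFailureRate f x)⁻¹ = ∫ s in Ioi 1, f (x * s) / f x := by
  have hsubst : ∫ s in Ioi 1, f (x * s) = x⁻¹ * ∫ t in Ioi x, f t := by
    simpa only [mul_one, smul_eq_mul] using integral_comp_mul_left_Ioi f 1 hx
  rw [generalizedFailureRate, inv_div, integral_div, hsubst]
  ring

lemma integrableOn_Ioi_one_comp_mul_div {x : ℝ} (hx : 0 < x) (hf : IntegrableOn f (Ioi x)) :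
    IntegrableOn (fun s => f (x * s) / f x) (Ioi 1) :=
  ((integrableOn_Ioi_comp_mul_left_iff f 1 hx).2 (by rwa [mul_one])).div_const _

lemma generalizedFailureRate_pos {x : ℝ} (hx : 0 < x) (hpos : ∀ t, x ≤ t → 0 < f t)
    (hf : IntegrableOn f (Ioi x)) : 0 < generalizedFailureRate f x :=
  div_pos (mul_pos hx (hpos x le_rfl)) <|
    setIntegral_pos_of_forall_pos measurableSet_Ioi (by simp) hf fun t ht => hpos t (le_of_lt ht)

lemma strictMonoOn_generalizedFailureRate (hpos : ∀ x, 0 < x → 0 < f x)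
    (hint : ∀ x, 0 < x → IntegrableOn f (Ioi x))
    (hratio : ∀ s, 1 < s → StrictAntiOn (fun x => f (x * s) / f x) (Ioi 0)) :
    StrictMonoOn (generalizedFailureRate f) (Ioi 0) := by
  intro x (hx : 0 < x) y (hy : 0 < y) hxy
  have hrate_pos : ∀ z, 0 < z → 0 < generalizedFailureRate f z := fun z hz =>
    generalizedFailureRate_pos hz (fun t ht => hpos t (hz.trans_le ht)) (hint z hz)
  rw [← inv_lt_inv₀ (hrate_pos y hy) (hrate_pos x hx), inv_generalizedFailureRate hx,
    inv_generalizedFailureRate hy]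
  exact setIntegral_lt_setIntegral_of_forall_lt measurableSet_Ioi (by simp)
    (integrableOn_Ioi_one_comp_mul_div hy (hint y hy))
    (integrableOn_Ioi_one_comp_mul_div hx (hint x hx)) fun s hs => hratio s hs hx hy hxy

lemma tendsto_generalizedFailureRate_atTop (hpos : ∀ x, 0 < x → 0 < f x)
    (hint : ∀ x, 0 < x → IntegrableOn f (Ioi x))
    (hratio : ∀ s, 1 < s → AntitoneOn (fun x => f (x * s) / f x) (Ioi 0))
    (hlim : ∀ s, 1 < s → Tendsto (fun x => f (x * s) / f x) atTop (𝓝 0)) :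
    Tendsto (generalizedFailureRate f) atTop atTop := by
  have hintegral : Tendsto (fun x => ∫ s in Ioi 1, f (x * s) / f x) atTop (𝓝 0) := by
    rw [← integral_zero ℝ ℝ (μ := volume.restrict (Ioi 1))]
    refine tendsto_integral_filter_of_dominated_convergence (fun s => f (1 * s) / f 1) ?_ ?_
      (integrableOn_Ioi_one_comp_mul_div one_pos (hint 1 one_pos))
      (ae_restrict_of_forall_mem measurableSet_Ioi hlim)
    · filter_upwards [eventually_gt_atTop 0] with x hx
      exact (integrableOn_Ioi_one_comp_mul_div hx (hint x hx)).aestronglyMeasurable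
    · filter_upwards [eventually_ge_atTop 1] with x hx
      refine ae_restrict_of_forall_mem measurableSet_Ioi fun s (hs : 1 < s) => ?_
      have hx0 : 0 < x := one_pos.trans_le hx
      have hs0 : 0 < s := one_pos.trans hs
      rw [Real.norm_of_nonneg (div_pos (hpos _ (mul_pos hx0 hs0)) (hpos x hx0)).le]
      exact hratio s hs (mem_Ioi.2 one_pos) hx0 hx
  have hinv : Tendsto (fun x => (generalizedFailureRate f x)⁻¹) atTop (𝓝[>] 0) := by
    refine tendsto_nhdsWithin_iff.2 ⟨hintegral.congr' ?_, ?_⟩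
    · filter_upwards [eventually_gt_atTop 0] with x hx
      exact (inv_generalizedFailureRate hx).symm
    · filter_upwards [eventually_gt_atTop 0] with x hx
      exact inv_pos.2 <|
        generalizedFailureRate_pos hx (fun t ht => hpos t (hx.trans_le ht)) (hint x hx)
  simpa only [Pi.inv_def, inv_inv] using hinv.inv_tendsto_nhdsGT_zero

lemma tendsto_generalizedFailureRate_nhdsGT_zero (hf : IntegrableOn f (Ioi 0))
    (hf0 : (∫ t in Ioi 0, f t) ≠ 0) (hlim : Tendsto (fun x => x * f x) (𝓝[>] 0) (𝓝 0)) :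
    Tendsto (generalizedFailureRate f) (𝓝[>] 0) (𝓝 0) := by
  have hquot := hlim.div (tendsto_setIntegral_Ioi_nhdsGT hf) hf0
  rwa [zero_div] at hquot

end GeneralizedFailureRate

section Gamma

variable {a b : ℝ}

lemma gammaPDFReal_of_pos {x : ℝ} (hx : 0 < x) :
    gammaPDFReal a b x = b ^ a / Real.Gamma a * x ^ (a - 1) * Real.exp (-(b * x)) :=
  if_pos hx.le

lemma integrable_gammaPDFReal (ha : 0 < a) (hb : 0 < b) : Integrable (gammaPDFReal a b) := by
  refine ⟨(stronglyMeasurable_gammaPDFReal a b).aestronglyMeasurable, ?_⟩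
  rw [hasFiniteIntegral_iff_ofReal (ae_of_all _ (gammaPDFReal_nonneg ha hb))]
  exact (lintegral_gammaPDF_eq_one ha hb).trans_lt ENNReal.one_lt_top

lemma gammaPDFReal_mul_div_self (ha : 0 < a) (hb : 0 < b) {x s : ℝ} (hx : 0 < x) (hs : 0 < s) :
    gammaPDFReal a b (x * s) / gammaPDFReal a b x =
      s ^ (a - 1) * Real.exp (-(b * (s - 1) * x)) := by
  have hexp : -(b * (x * s)) = -(b * (s - 1) * x) + -(b * x) := by ring
  rw [div_eq_iff (gammaPDFReal_pos ha hb hx).ne', gammaPDFReal_of_pos (mul_pos hx hs),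
    gammaPDFReal_of_pos hx, Real.mul_rpow hx.le hs.le, hexp, Real.exp_add]
  ring

lemma strictAntiOn_gammaPDFReal_mul_div_self (ha : 0 < a) (hb : 0 < b) {s : ℝ} (hs : 1 < s) :
    StrictAntiOn (fun x => gammaPDFReal a b (x * s) / gammaPDFReal a b x) (Ioi 0) := by
  intro x (hx : 0 < x) y (hy : 0 < y) hxy
  have hs0 : 0 < s := one_pos.trans hs
  have : 0 < b * (s - 1) := mul_pos hb (sub_pos.2 hs)
  simp only [gammaPDFReal_mul_div_self ha hb hx hs0, gammaPDFReal_mul_div_self ha hb hy hs0]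
  gcongr

lemma tendsto_gammaPDFReal_mul_div_self_atTop (ha : 0 < a) (hb : 0 < b) {s : ℝ} (hs : 1 < s) :
    Tendsto (fun x => gammaPDFReal a b (x * s) / gammaPDFReal a b x) atTop (𝓝 0) := by
  have hexponent : Tendsto (fun x => b * (s - 1) * x) atTop atTop :=
    tendsto_id.const_mul_atTop (mul_pos hb (sub_pos.2 hs))
  have hlim : Tendsto (fun x => s ^ (a - 1) * Real.exp (-(b * (s - 1) * x))) atTop (𝓝 0) := by
    simpa only [mul_zero, Function.comp_def] using
      (Real.tendsto_exp_neg_atTop_nhds_zero.comp hexponent).const_mul (s ^ (a - 1))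
  refine hlim.congr' ?_
  filter_upwards [eventually_gt_atTop 0] with x hx
  exact (gammaPDFReal_mul_div_self ha hb hx (one_pos.trans hs)).symm

lemma tendsto_mul_gammaPDFReal_nhdsGT_zero (ha : 0 < a) :
    Tendsto (fun x => x * gammaPDFReal a b x) (𝓝[>] 0) (𝓝 0) := by
  have hcont : ContinuousAt
      (fun x : ℝ => b ^ a / Real.Gamma a * x ^ a * Real.exp (-(b * x))) 0 :=
    (continuousAt_const.mul (Real.continuousAt_rpow_const 0 a (Or.inr ha.le))).mul (by fun_prop)
  have hlim : Tendsto (fun x : ℝ => b ^ a / Real.Gamma a * x ^ a * Real.exp (-(b * x)))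
      (𝓝[>] 0) (𝓝 0) := by
    simpa only [Real.zero_rpow ha.ne', mul_zero, zero_mul] using
      hcont.tendsto.mono_left nhdsWithin_le_nhds
  refine hlim.congr' ?_
  filter_upwards [self_mem_nhdsWithin] with x (hx : 0 < x)
  rw [gammaPDFReal_of_pos hx, Real.rpow_sub_one hx.ne']
  field_simp

end Gamma

/-- For the Gamma density f(x) = (b^a/Γ(a)) x^{a−1} e^{−bx} (x > 0)
and G(x) = x f(x)/∫_x^∞ f, G is strictly increasing on (0,∞), tends to 0 as
x → 0⁺ and to ∞ as x → ∞ — so the Gamma distribution satisfies Assumption 1. -/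
theorem stmt_9 (a b : ℝ) (ha : 0 < a) (hb : 0 < b)
    (f : ℝ → ℝ)
    (hf : ∀ x : ℝ, 0 < x →
      f x = (b ^ a / Real.Gamma a) * x ^ (a - 1) * Real.exp (-(b * x)))
    (G : ℝ → ℝ)
    (hG : ∀ x : ℝ, 0 < x → G x = x * f x / ∫ t in Ioi x, f t) :
    StrictMonoOn G (Ioi 0) ∧
    Tendsto G (nhdsWithin 0 (Ioi 0)) (nhds 0) ∧
    Tendsto G atTop atTop := by
  have hf_eq : EqOn f (gammaPDFReal a b) (Ioi 0) := fun x hx =>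
    (hf x hx).trans (gammaPDFReal_of_pos hx).symm
  have hG_eq : EqOn (generalizedFailureRate (gammaPDFReal a b)) G (Ioi 0) := fun x hx => by
    rw [hG x hx, hf_eq hx,
      setIntegral_congr_fun measurableSet_Ioi (hf_eq.mono (Ioi_subset_Ioi (le_of_lt hx))),
      generalizedFailureRate]
  have hpos : ∀ x, 0 < x → 0 < gammaPDFReal a b x := fun _ => gammaPDFReal_pos ha hb
  have hint : ∀ x, IntegrableOn (gammaPDFReal a b) (Ioi x) := fun _ =>
    (integrable_gammaPDFReal ha hb).integrableOn
  have hmass : 0 < ∫ t in Ioi 0, gammaPDFReal a b t :=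
    setIntegral_pos_of_forall_pos measurableSet_Ioi (by simp) (hint 0) hpos
  have hratio := fun s => strictAntiOn_gammaPDFReal_mul_div_self ha hb (s := s)
  refine ⟨StrictMonoOn.congr ?_ hG_eq,
    Tendsto.congr' (hG_eq.eventuallyEq_of_mem self_mem_nhdsWithin) ?_,
    Tendsto.congr' (hG_eq.eventuallyEq_of_mem (Ioi_mem_atTop 0)) ?_⟩
  · exact strictMonoOn_generalizedFailureRate hpos (fun x _ => hint x) hratio
  · exact tendsto_generalizedFailureRate_nhdsGT_zero (hint 0) hmass.ne'
      (tendsto_mul_gammaPDFReal_nhdsGT_zero ha)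
  · exact tendsto_generalizedFailureRate_atTop hpos (fun x _ => hint x)
      (fun s hs => (hratio s hs).antitoneOn)
      fun s => tendsto_gammaPDFReal_mul_div_self_atTop ha hb
end

section
/- Let a > 0 and b > 0, let B(a,b) = Γ(a)Γ(b)/Γ(a+b), and define f(x) = x^{a−1}(1−x)^{b−1}/B(a,b) for x ∈ (0,1), and G(x) = x·f(x)/∫_x^1 f(t) dt for x ∈ (0,1). Then G is strictly increasing on (0,1), G(x) → 0 as x → 0⁺, and G(x) → ∞ as x → 1⁻ (so the Beta distribution satisfies Assumption 1). -/
open Set Filter MeasureTheory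

/-!
Work with `1 / G`, which does not see the normalising constant `B`. The affine substitution
`t = 1 - (1 - x) s` carries the tail `(x, 1)` to `(0, 1)` for every `x`, and with
`y = 1 - (1 - x) s` it gives
`1 / G x = ∫₀¹ (1 - x) / y * (y / x) ^ a * s ^ (b - 1) ds`.
For fixed `s` both `(1 - x) / y` and `y / x` strictly decrease in `x`, hence so does `1 / G`,
whatever the size of `b`. Bounding `y` between `x` and `1` yields `1 / G → 0` at `1`, and bounding
it between `1 - s` and `1` shows that `1 / G` is at least of order `x ^ (-a)` at `0`.
-/

open scoped Topology

/-- The density of the Beta distribution without its normalising constant. -/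
noncomputable def betaWeight (a b t : ℝ) : ℝ := t ^ (a - 1) * (1 - t) ^ (b - 1)

/-- The Mills ratio (tail mass over density) of a density `f` on `(0, 1)`, divided by `x`. This is
the reciprocal of the generalized failure rate `G`. -/
noncomputable def scaledMillsRatio (f : ℝ → ℝ) (x : ℝ) : ℝ := (∫ t in x..1, f t) / (x * f x)

/-- The factor other than `s ^ (b - 1)` in the integrand of the scaled Mills ratio of the Beta
weight, after the substitution `t = 1 - (1 - x) * s`. -/
noncomputable def betaKernel (a x s : ℝ) : ℝ :=
  (1 - x) / (1 - (1 - x) * s) * ((1 - (1 - x) * s) / x) ^ a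

section ScaledMillsRatio

variable {a b x s : ℝ} {f g : ℝ → ℝ}

theorem le_one_sub_one_sub_mul (hx : x ≤ 1) (hs : s ≤ 1) : x ≤ 1 - (1 - x) * s := by
  linarith [mul_le_of_le_one_right (sub_nonneg.2 hx) hs]

theorem betaKernel_pos (hx : x ∈ Ioo (0 : ℝ) 1) (hs : s ≤ 1) : 0 < betaKernel a x s := by
  have hx₀ : 0 < x := hx.1
  have hx₁ : 0 < 1 - x := sub_pos.2 hx.2
  have hy : 0 < 1 - (1 - x) * s := hx₀.trans_le (le_one_sub_one_sub_mul hx.2.le hs)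
  unfold betaKernel
  positivity

theorem betaKernel_strictAntiOn (ha : 0 ≤ a) (hs : s ≤ 1) :
    StrictAntiOn (fun x ↦ betaKernel a x s) (Ioo 0 1) := by
  intro x hx y hy hxy
  have hx₀ : 0 < x := hx.1
  have hy₀ : 0 < y := hy.1
  have hx₁ : 0 < 1 - x := sub_pos.2 hx.2
  have hx' : 0 < 1 - (1 - x) * s := hx₀.trans_le (le_one_sub_one_sub_mul hx.2.le hs)
  have hy' : 0 < 1 - (1 - y) * s := hy₀.trans_le (le_one_sub_one_sub_mul hy.2.le hs)
  have first_factor : (1 - y) / (1 - (1 - y) * s) < (1 - x) / (1 - (1 - x) * s) := by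
    rw [div_lt_div_iff₀ hy' hx']
    linarith
  have base : (1 - (1 - y) * s) / y ≤ (1 - (1 - x) * s) / x := by
    rw [div_le_div_iff₀ hy₀ hx₀]
    linarith [mul_nonneg (sub_nonneg.2 hxy.le) (sub_nonneg.2 hs)]
  have second_factor : ((1 - (1 - y) * s) / y) ^ a ≤ ((1 - (1 - x) * s) / x) ^ a :=
    Real.rpow_le_rpow (by positivity) base ha
  exact mul_lt_mul first_factor second_factor (by positivity) (by positivity)

theorem betaKernel_le (ha : 0 ≤ a) (hx : x ∈ Ioo (0 : ℝ) 1) (hs : s ∈ Icc (0 : ℝ) 1) :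
    betaKernel a x s ≤ (1 - x) / x * (1 / x) ^ a := by
  have hx₀ : 0 < x := hx.1
  have hx₁ : 0 ≤ 1 - x := sub_nonneg.2 hx.2.le
  have hxy : x ≤ 1 - (1 - x) * s := le_one_sub_one_sub_mul hx.2.le hs.2
  have hy₀ : 0 < 1 - (1 - x) * s := hx₀.trans_le hxy
  have hy₁ : 1 - (1 - x) * s ≤ 1 := sub_le_self _ (mul_nonneg hx₁ hs.1)
  unfold betaKernel
  gcongr

theorem le_betaKernel (ha : 0 ≤ a) (hx : x ∈ Ioo (0 : ℝ) 1) (hs : s ∈ Icc (0 : ℝ) 1) :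
    (1 - x) * ((1 - s) / x) ^ a ≤ betaKernel a x s := by
  have hx₀ : 0 < x := hx.1
  have hx₁ : 0 ≤ 1 - x := sub_nonneg.2 hx.2.le
  have hs₁ : 0 ≤ 1 - s := sub_nonneg.2 hs.2
  have hy₀ : 0 < 1 - (1 - x) * s := hx₀.trans_le (le_one_sub_one_sub_mul hx.2.le hs.2)
  have hy₁ : 1 - (1 - x) * s ≤ 1 := sub_le_self _ (mul_nonneg hx₁ hs.1)
  have hsy : 1 - s ≤ 1 - (1 - x) * s := by linarith [mul_nonneg hx₀.le hs.1]
  unfold betaKernel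
  gcongr
  exact le_div_self hx₁ hy₀ hy₁

theorem continuousOn_betaKernel (hx : x ∈ Ioo (0 : ℝ) 1) :
    ContinuousOn (betaKernel a x) (Icc 0 1) := by
  have hy : ∀ s ∈ Icc (0 : ℝ) 1, 1 - (1 - x) * s ≠ 0 := fun s hs ↦
    (hx.1.trans_le (le_one_sub_one_sub_mul hx.2.le hs.2)).ne'
  have hyx : ∀ s ∈ Icc (0 : ℝ) 1, (1 - (1 - x) * s) / x ≠ 0 := fun s hs ↦
    div_ne_zero (hy s hs) hx.1.ne'
  exact (continuousOn_const.div (by fun_prop) hy).mul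
    (ContinuousOn.rpow_const (by fun_prop) fun s hs ↦ .inl (hyx s hs))

theorem intervalIntegrable_mul_rpow_sub_one (hb : 0 < b) (hf : ContinuousOn f (Icc 0 1)) :
    IntervalIntegrable (fun s ↦ f s * s ^ (b - 1)) volume 0 1 :=
  (intervalIntegral.intervalIntegrable_rpow' (by linarith)).continuousOn_mul
    (by rwa [uIcc_of_le zero_le_one])

theorem integral_mul_rpow_sub_one_pos (hb : 0 < b) (hf : ContinuousOn f (Icc 0 1))
    (hpos : ∀ s ∈ Ioo (0 : ℝ) 1, 0 < f s) : 0 < ∫ s in (0 : ℝ)..1, f s * s ^ (b - 1) :=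
  intervalIntegral.intervalIntegral_pos_of_pos_on (intervalIntegrable_mul_rpow_sub_one hb hf)
    (fun s hs ↦ mul_pos (hpos s hs) (Real.rpow_pos_of_pos hs.1 _)) zero_lt_one

theorem integral_mul_rpow_sub_one_lt (hb : 0 < b) (hf : ContinuousOn f (Icc 0 1))
    (hg : ContinuousOn g (Icc 0 1)) (hlt : ∀ s ∈ Ioo (0 : ℝ) 1, f s < g s) :
    ∫ s in (0 : ℝ)..1, f s * s ^ (b - 1) < ∫ s in (0 : ℝ)..1, g s * s ^ (b - 1) := by
  rw [← sub_pos, ← intervalIntegral.integral_sub (intervalIntegrable_mul_rpow_sub_one hb hg)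
    (intervalIntegrable_mul_rpow_sub_one hb hf)]
  simp only [← sub_mul]
  exact integral_mul_rpow_sub_one_pos hb (hg.sub hf) fun s hs ↦ sub_pos.2 (hlt s hs)

theorem integral_mul_rpow_sub_one_mono (hb : 0 < b) (hf : ContinuousOn f (Icc 0 1))
    (hg : ContinuousOn g (Icc 0 1)) (hle : ∀ s ∈ Icc (0 : ℝ) 1, f s ≤ g s) :
    ∫ s in (0 : ℝ)..1, f s * s ^ (b - 1) ≤ ∫ s in (0 : ℝ)..1, g s * s ^ (b - 1) :=
  intervalIntegral.integral_mono_on zero_le_one (intervalIntegrable_mul_rpow_sub_one hb hf)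
    (intervalIntegrable_mul_rpow_sub_one hb hg)
    fun s hs ↦ mul_le_mul_of_nonneg_right (hle s hs) (Real.rpow_nonneg hs.1 _)

theorem integral_rpow_sub_one_zero_one (hb : 0 < b) : ∫ s in (0 : ℝ)..1, s ^ (b - 1) = 1 / b := by
  rw [integral_rpow (.inl (by linarith)), sub_add_cancel, Real.one_rpow, Real.zero_rpow hb.ne',
    sub_zero]

theorem scaledMillsRatio_eq_of_eq_div_const {c : ℝ} (hc : c ≠ 0)
    (hfg : ∀ t ∈ Ioo (0 : ℝ) 1, f t = g t / c) (hx : x ∈ Ioo (0 : ℝ) 1) :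
    scaledMillsRatio f x = scaledMillsRatio g x := by
  have tail : ∫ t in x..1, f t = (∫ t in x..1, g t) / c := by
    rw [← intervalIntegral.integral_div]
    exact intervalIntegral.integral_congr_Ioo_of_le hx.2.le fun t ht ↦
      hfg t ⟨hx.1.trans ht.1, ht.2⟩
  rw [scaledMillsRatio, scaledMillsRatio, tail, hfg x hx, ← mul_div_assoc,
    div_div_div_cancel_right₀ hc]

theorem one_sub_mul_betaWeight (hx : x ∈ Ioo (0 : ℝ) 1) (hs : s ∈ Icc (0 : ℝ) 1) :
    (1 - x) * betaWeight a b (1 - (1 - x) * s) =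
      x * betaWeight a b x * (betaKernel a x s * s ^ (b - 1)) := by
  have hx₀ : 0 < x := hx.1
  have hx₁ : 0 < 1 - x := sub_pos.2 hx.2
  have hy : 0 < 1 - (1 - x) * s := hx₀.trans_le (le_one_sub_one_sub_mul hx.2.le hs.2)
  rw [betaWeight, betaWeight, betaKernel, sub_sub_cancel, Real.mul_rpow hx₁.le hs.1,
    Real.div_rpow hy.le hx₀.le, Real.rpow_sub_one hy.ne', Real.rpow_sub_one hx₀.ne']
  have := Real.rpow_pos_of_pos hx₀ a
  field_simp

theorem scaledMillsRatio_betaWeight_eq_integral (hx : x ∈ Ioo (0 : ℝ) 1) :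
    scaledMillsRatio (betaWeight a b) x = ∫ s in (0 : ℝ)..1, betaKernel a x s * s ^ (b - 1) := by
  have hx₀ : 0 < x := hx.1
  have hx₁ : 0 < 1 - x := sub_pos.2 hx.2
  have hpos : 0 < x * betaWeight a b x := by
    unfold betaWeight
    positivity
  rw [scaledMillsRatio, div_eq_iff hpos.ne', mul_comm]
  calc ∫ t in x..1, betaWeight a b t
      = (1 - x) * ∫ s in (0 : ℝ)..1, betaWeight a b (1 - (1 - x) * s) := by
        rw [intervalIntegral.mul_integral_comp_sub_mul, mul_one, mul_zero, sub_sub_cancel, sub_zero]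
    _ = ∫ s in (0 : ℝ)..1, x * betaWeight a b x * (betaKernel a x s * s ^ (b - 1)) := by
        rw [← intervalIntegral.integral_const_mul]
        refine intervalIntegral.integral_congr fun s hs ↦ one_sub_mul_betaWeight hx ?_
        rwa [uIcc_of_le zero_le_one] at hs
    _ = x * betaWeight a b x * ∫ s in (0 : ℝ)..1, betaKernel a x s * s ^ (b - 1) :=
        intervalIntegral.integral_const_mul _ _

theorem scaledMillsRatio_betaWeight_pos (hb : 0 < b) (hx : x ∈ Ioo (0 : ℝ) 1) :
    0 < scaledMillsRatio (betaWeight a b) x := by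
  rw [scaledMillsRatio_betaWeight_eq_integral hx]
  exact integral_mul_rpow_sub_one_pos hb (continuousOn_betaKernel hx) fun s hs ↦
    betaKernel_pos hx hs.2.le

theorem scaledMillsRatio_betaWeight_strictAntiOn (ha : 0 ≤ a) (hb : 0 < b) :
    StrictAntiOn (scaledMillsRatio (betaWeight a b)) (Ioo 0 1) := by
  intro x hx y hy hxy
  rw [scaledMillsRatio_betaWeight_eq_integral hx, scaledMillsRatio_betaWeight_eq_integral hy]
  exact integral_mul_rpow_sub_one_lt hb (continuousOn_betaKernel hy) (continuousOn_betaKernel hx)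
    fun s hs ↦ betaKernel_strictAntiOn ha hs.2.le hx hy hxy

theorem scaledMillsRatio_betaWeight_le (ha : 0 ≤ a) (hb : 0 < b) (hx : x ∈ Ioo (0 : ℝ) 1) :
    scaledMillsRatio (betaWeight a b) x ≤ (1 - x) / x * (1 / x) ^ a * (1 / b) := by
  rw [scaledMillsRatio_betaWeight_eq_integral hx, ← integral_rpow_sub_one_zero_one hb,
    ← intervalIntegral.integral_const_mul]
  exact integral_mul_rpow_sub_one_mono hb (continuousOn_betaKernel hx) continuousOn_const
    fun s hs ↦ betaKernel_le ha hx hs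

theorem le_scaledMillsRatio_betaWeight (ha : 0 ≤ a) (hb : 0 < b) (hx : x ∈ Ioo (0 : ℝ) 1) :
    (∫ s in (0 : ℝ)..1, (1 - s) ^ a * s ^ (b - 1)) * (1 - x) * x ^ (-a) ≤
      scaledMillsRatio (betaWeight a b) x := by
  have hcont : ContinuousOn (fun s : ℝ ↦ (1 - x) * ((1 - s) / x) ^ a) (Icc 0 1) :=
    continuousOn_const.mul (ContinuousOn.rpow_const (by fun_prop) fun _ _ ↦ .inr ha)
  calc (∫ s in (0 : ℝ)..1, (1 - s) ^ a * s ^ (b - 1)) * (1 - x) * x ^ (-a)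
      = ∫ s in (0 : ℝ)..1, (1 - x) * ((1 - s) / x) ^ a * s ^ (b - 1) := by
        rw [mul_assoc, ← intervalIntegral.integral_mul_const]
        refine intervalIntegral.integral_congr fun s hs ↦ ?_
        rw [uIcc_of_le zero_le_one] at hs
        simp only [Real.div_rpow (sub_nonneg.2 hs.2) hx.1.le, Real.rpow_neg hx.1.le]
        ring
    _ ≤ ∫ s in (0 : ℝ)..1, betaKernel a x s * s ^ (b - 1) :=
        integral_mul_rpow_sub_one_mono hb hcont (continuousOn_betaKernel hx)
          fun s hs ↦ le_betaKernel ha hx hs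
    _ = scaledMillsRatio (betaWeight a b) x := (scaledMillsRatio_betaWeight_eq_integral hx).symm

theorem tendsto_scaledMillsRatio_betaWeight_nhdsGT_zero (ha : 0 < a) (hb : 0 < b) :
    Tendsto (scaledMillsRatio (betaWeight a b)) (𝓝[>] 0) atTop := by
  set C := ∫ s in (0 : ℝ)..1, (1 - s) ^ a * s ^ (b - 1)
  have hC : 0 < C := integral_mul_rpow_sub_one_pos hb
    (ContinuousOn.rpow_const (by fun_prop) fun _ _ ↦ .inr ha.le)
    fun s hs ↦ Real.rpow_pos_of_pos (sub_pos.2 hs.2) a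
  have hfactor : Tendsto (fun x : ℝ ↦ C * (1 - x)) (𝓝[>] 0) (𝓝 C) :=
    tendsto_nhdsWithin_of_tendsto_nhds (Continuous.tendsto' (by fun_prop) _ _ (by simp))
  have hlower : Tendsto (fun x : ℝ ↦ C * (1 - x) * x ^ (-a)) (𝓝[>] 0) atTop :=
    hfactor.pos_mul_atTop hC (tendsto_rpow_neg_nhdsGT_zero (neg_lt_zero.2 ha))
  refine tendsto_atTop_mono' _ ?_ hlower
  filter_upwards [Ioo_mem_nhdsGT zero_lt_one] with x hx
  exact le_scaledMillsRatio_betaWeight ha.le hb hx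

theorem tendsto_scaledMillsRatio_betaWeight_nhdsLT_one (ha : 0 ≤ a) (hb : 0 < b) :
    Tendsto (scaledMillsRatio (betaWeight a b)) (𝓝[<] 1) (𝓝[>] 0) := by
  have hupper : Tendsto (fun x : ℝ ↦ (1 - x) / x * (1 / x) ^ a * (1 / b)) (𝓝[<] 1) (𝓝 0) := by
    have hcont : ContinuousAt (fun x : ℝ ↦ (1 - x) / x * (1 / x) ^ a * (1 / b)) 1 := by
      fun_prop (disch := norm_num)
    simpa using hcont.tendsto.mono_left nhdsWithin_le_nhds
  have hmem : ∀ᶠ x : ℝ in 𝓝[<] 1, x ∈ Ioo (0 : ℝ) 1 := Ioo_mem_nhdsLT zero_lt_one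
  have hpos : ∀ᶠ x in 𝓝[<] 1, 0 < scaledMillsRatio (betaWeight a b) x :=
    hmem.mono fun x hx ↦ scaledMillsRatio_betaWeight_pos hb hx
  refine tendsto_nhdsWithin_iff.2 ⟨?_, hpos⟩
  exact squeeze_zero' (hpos.mono fun _ ↦ le_of_lt)
    (hmem.mono fun x hx ↦ scaledMillsRatio_betaWeight_le ha hb hx) hupper

end ScaledMillsRatio

/-- For the Beta density f(x) = x^{a−1}(1−x)^{b−1}/B(a,b) on (0,1)
and G(x) = x f(x)/∫_x^1 f, G is strictly increasing on (0,1), tends to 0 as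
x → 0⁺ and to ∞ as x → 1⁻ — so the Beta distribution satisfies Assumption 1. -/
theorem stmt_10 (a b : ℝ) (ha : 0 < a) (hb : 0 < b)
    (B : ℝ) (hB : B = Real.Gamma a * Real.Gamma b / Real.Gamma (a + b))
    (f : ℝ → ℝ)
    (hf : ∀ x ∈ Ioo (0:ℝ) 1, f x = x ^ (a - 1) * (1 - x) ^ (b - 1) / B)
    (G : ℝ → ℝ)
    (hG : ∀ x ∈ Ioo (0:ℝ) 1, G x = x * f x / ∫ t in Ioo x 1, f t) :
    StrictMonoOn G (Ioo 0 1) ∧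
    Tendsto G (nhdsWithin 0 (Ioi 0)) (nhds 0) ∧
    Tendsto G (nhdsWithin 1 (Iio 1)) atTop := by
  have hB₀ : B ≠ 0 := hB ▸ (ProbabilityTheory.beta_pos ha hb).ne'
  have G_eq : EqOn (scaledMillsRatio (betaWeight a b))⁻¹ G (Ioo 0 1) := fun x hx ↦ by
    rw [Pi.inv_apply, ← scaledMillsRatio_eq_of_eq_div_const (g := betaWeight a b) hB₀ hf hx,
      scaledMillsRatio, inv_div, hG x hx, intervalIntegral.integral_of_le hx.2.le,
      integral_Ioc_eq_integral_Ioo]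
  refine ⟨StrictMonoOn.congr (fun x hx y hy hxy ↦ ?_) G_eq, ?_, ?_⟩
  · exact inv_strictAnti₀ (scaledMillsRatio_betaWeight_pos hb hy)
      (scaledMillsRatio_betaWeight_strictAntiOn ha.le hb hx hy hxy)
  · exact (tendsto_scaledMillsRatio_betaWeight_nhdsGT_zero ha hb).inv_tendsto_atTop.congr'
      (G_eq.eventuallyEq_of_mem (Ioo_mem_nhdsGT zero_lt_one))
  · exact (tendsto_scaledMillsRatio_betaWeight_nhdsLT_one ha.le hb).inv_tendsto_nhdsGT_zero.congr'
      (G_eq.eventuallyEq_of_mem (Ioo_mem_nhdsLT zero_lt_one))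
end

section
/- Assume F is differentiable on (0,u) with derivative f and Assumption 1 holds. Let ρ ∈ (0,1), α ∈ (0,1), let d* be the unique solution in (0,ρ) of ρ·(α + d^{α+1}) = (α+1)·d, let β = (1 − (d*)^{α+1})/(1 − (d*)^α·ρ), and let x̄ ∈ (0,u) satisfy G(x̄) = 1/(α+1). Then for every x with x̄ ≤ x < u: sup over y ∈ [x,u) and δ ∈ (0,ρ) of ( x − δ^{α+1}·y + ρ·δ^α·((1 − F(y))/(1 − F(x)))·β·y ) equals β·x, and the supremum is attained at (y,δ) = (x, d*). -/
open Set MeasureTheory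

/-!
Write `q = (1 - F y) / (1 - F x)` and rescale the discount rate as `δ = q * ε`. The payoff becomes
`x + y * q ^ (α + 1) * (ρ * β * ε ^ α - ε ^ (α + 1))`, which separates the two choices. By Young's
inequality the last factor is at most `β - 1`, its value at `ε = d*`. The factor `y * q ^ (α + 1)`
is at most `x`, because `z * (1 - F z) ^ (α + 1)` is nonincreasing wherever `1 / (α + 1) ≤ G z`.
-/

section RepaymentAmount

variable {D : Set ℝ} {S S' : ℝ → ℝ} {p : ℝ}

theorem antitoneOn_mul_rpow_of_add_mul_deriv_nonpos (hD : Convex ℝ D) (hS : ContinuousOn S D)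
    (hS_pos : ∀ z ∈ D, 0 < S z) (hS' : ∀ z ∈ interior D, HasDerivAt S (S' z) z)
    (hS'_le : ∀ z ∈ interior D, S z + p * z * S' z ≤ 0) :
    AntitoneOn (fun z ↦ z * S z ^ p) D := by
  have hderiv : ∀ z ∈ interior D,
      HasDerivAt (fun z ↦ z * S z ^ p) (S z ^ (p - 1) * (S z + p * z * S' z)) z := by
    intro z hz
    have hSz : S z ≠ 0 := (hS_pos z (interior_subset hz)).ne'
    refine ((hasDerivAt_id' z).fun_mul ((hS' z hz).rpow_const (Or.inl hSz))).congr_deriv ?_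
    rw [Real.rpow_sub_one hSz]
    field_simp
  refine antitoneOn_of_hasDerivWithinAt_nonpos hD
    (continuousOn_id.mul (hS.rpow_const fun z hz ↦ Or.inl (hS_pos z hz).ne'))
    (fun z hz ↦ (hderiv z hz).hasDerivWithinAt) fun z hz ↦ ?_
  exact mul_nonpos_of_nonneg_of_nonpos
    (Real.rpow_nonneg (hS_pos z (interior_subset hz)).le _) (hS'_le z hz)

theorem mul_div_rpow_le_of_antitoneOn (hanti : AntitoneOn (fun z ↦ z * S z ^ p) D)
    (hS_pos : ∀ z ∈ D, 0 < S z) {x y : ℝ} (hx : x ∈ D) (hy : y ∈ D) (hxy : x ≤ y) :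
    y * (S y / S x) ^ p ≤ x := by
  rw [Real.div_rpow (hS_pos y hy).le (hS_pos x hx).le, ← mul_div_assoc,
    div_le_iff₀ (Real.rpow_pos_of_pos (hS_pos x hx) p)]
  exact hanti hx hy hxy

theorem mul_survival_ratio_rpow_le {f F : ℝ → ℝ} {x y : ℝ} (hp : 0 < p) (hxy : x ≤ y)
    (hF_deriv : ∀ z ∈ Icc x y, HasDerivAt F (f z) z) (hF_lt : ∀ z ∈ Icc x y, F z < 1)
    (hG : ∀ z ∈ Icc x y, 1 / p ≤ z * f z / (1 - F z)) :
    y * ((1 - F y) / (1 - F x)) ^ p ≤ x := by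
  have hS_pos : ∀ z ∈ Icc x y, 0 < 1 - F z := fun z hz ↦ sub_pos.2 (hF_lt z hz)
  have hS_deriv : ∀ z ∈ Icc x y, HasDerivAt (fun z ↦ 1 - F z) (-f z) z :=
    fun z hz ↦ (hF_deriv z hz).const_sub 1
  have hanti : AntitoneOn (fun z ↦ z * (1 - F z) ^ p) (Icc x y) := by
    refine antitoneOn_mul_rpow_of_add_mul_deriv_nonpos (convex_Icc x y)
      (fun z hz ↦ (hS_deriv z hz).continuousAt.continuousWithinAt) hS_pos
      (fun z hz ↦ hS_deriv z (interior_subset hz)) fun z hz ↦ ?_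
    have hGz := hG z (interior_subset hz)
    rw [div_le_div_iff₀ hp (hS_pos z (interior_subset hz))] at hGz
    linarith
  exact mul_div_rpow_le_of_antitoneOn hanti hS_pos (left_mem_Icc.2 hxy) (right_mem_Icc.2 hxy) hxy

end RepaymentAmount

section DiscountRate

theorem add_one_mul_mul_rpow_le {α d ε : ℝ} (hα : 0 < α) (hd : 0 ≤ d) (hε : 0 ≤ ε) :
    (α + 1) * (d * ε ^ α) ≤ d ^ (α + 1) + α * ε ^ (α + 1) := by
  have hconj : (α + 1).HolderConjugate ((α + 1) / α) := by
    rw [Real.holderConjugate_iff]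
    refine ⟨by linarith, ?_⟩
    field_simp
    ring
  calc (α + 1) * (d * ε ^ α)
      ≤ (α + 1) * (d ^ (α + 1) / (α + 1) + (ε ^ α) ^ ((α + 1) / α) / ((α + 1) / α)) := by
        gcongr
        exact Real.young_inequality_of_nonneg hd (Real.rpow_nonneg hε α) hconj
    _ = d ^ (α + 1) + α * ε ^ (α + 1) := by
        rw [← Real.rpow_mul hε, mul_div_cancel₀ _ hα.ne']
        field_simp

/-- The factor `β` of the paper: the value, per unit of the constant repayment amount, of lending
forever at the discount rate `d` under the demand `s(d) = d ^ α`. It has the junk value `0` when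
`d ^ α * ρ = 1`. -/
noncomputable def lendingValue (ρ α d : ℝ) : ℝ :=
  (1 - d ^ (α + 1)) / (1 - d ^ α * ρ)

variable {ρ α d : ℝ}

theorem lendingValue_eq_one_sub_add (hdρ : d ^ α * ρ ≠ 1) :
    lendingValue ρ α d = 1 - d ^ (α + 1) + ρ * d ^ α * lendingValue ρ α d := by
  have hmul : lendingValue ρ α d * (1 - d ^ α * ρ) = 1 - d ^ (α + 1) :=
    div_mul_cancel₀ _ (sub_ne_zero.2 hdρ.symm)
  linear_combination hmul

theorem mul_lendingValue (hd : 0 < d) (hdρ : d ^ α * ρ ≠ 1)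
    (hstat : ρ * (α + d ^ (α + 1)) = (α + 1) * d) :
    α * lendingValue ρ α d = α + d ^ (α + 1) := by
  have hfix := lendingValue_eq_one_sub_add hdρ
  rw [Real.rpow_add_one hd.ne'] at hfix hstat ⊢
  apply mul_right_cancel₀ (sub_ne_zero.2 hdρ.symm)
  linear_combination α * hfix + d ^ α * hstat

theorem one_le_lendingValue (hα : 0 < α) (hd : 0 < d) (hdρ : d ^ α * ρ ≠ 1)
    (hstat : ρ * (α + d ^ (α + 1)) = (α + 1) * d) : 1 ≤ lendingValue ρ α d := by
  refine le_of_mul_le_mul_left ?_ hα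
  rw [mul_lendingValue hd hdρ hstat, mul_one]
  exact le_add_of_nonneg_right (Real.rpow_nonneg hd.le _)

theorem mul_rpow_sub_rpow_le_lendingValue_sub_one (hα : 0 < α) (hd : 0 < d)
    (hdρ : d ^ α * ρ ≠ 1) (hstat : ρ * (α + d ^ (α + 1)) = (α + 1) * d) {ε : ℝ} (hε : 0 ≤ ε) :
    ρ * lendingValue ρ α d * ε ^ α - ε ^ (α + 1) ≤ lendingValue ρ α d - 1 := by
  have hβ := mul_lendingValue hd hdρ hstat
  refine le_of_mul_le_mul_left ?_ hα
  calc α * (ρ * lendingValue ρ α d * ε ^ α - ε ^ (α + 1))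
      = (α + 1) * (d * ε ^ α) - α * ε ^ (α + 1) := by
        linear_combination ρ * ε ^ α * hβ + ε ^ α * hstat
    _ ≤ d ^ (α + 1) := sub_le_iff_le_add.2 (add_one_mul_mul_rpow_le hα hd.le hε)
    _ = α * (lendingValue ρ α d - 1) := by linear_combination -hβ

theorem payoff_le_lendingValue_mul (hα : 0 < α) (hd : 0 < d) (hdρ : d ^ α * ρ ≠ 1)
    (hstat : ρ * (α + d ^ (α + 1)) = (α + 1) * d) {x y q δ : ℝ} (hy : 0 ≤ y) (hq : 0 < q)
    (hyq : y * q ^ (α + 1) ≤ x) (hδ : 0 ≤ δ) :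
    x - δ ^ (α + 1) * y + ρ * δ ^ α * q * lendingValue ρ α d * y ≤ lendingValue ρ α d * x := by
  obtain ⟨ε, hε, rfl⟩ : ∃ ε, 0 ≤ ε ∧ δ = q * ε :=
    ⟨δ / q, div_nonneg hδ hq.le, (mul_div_cancel₀ δ hq.ne').symm⟩
  set β := lendingValue ρ α d
  have hβ : 0 ≤ β - 1 := sub_nonneg.2 (one_le_lendingValue hα hd hdρ hstat)
  have hε_le : ρ * β * ε ^ α - ε ^ (α + 1) ≤ β - 1 :=
    mul_rpow_sub_rpow_le_lendingValue_sub_one hα hd hdρ hstat hε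
  calc x - (q * ε) ^ (α + 1) * y + ρ * (q * ε) ^ α * q * β * y
      = x + y * q ^ (α + 1) * (ρ * β * ε ^ α - ε ^ (α + 1)) := by
        rw [Real.mul_rpow hq.le hε, Real.mul_rpow hq.le hε, Real.rpow_add_one hq.ne']
        ring
    _ ≤ x + y * q ^ (α + 1) * (β - 1) := by gcongr
    _ ≤ x + x * (β - 1) := by gcongr
    _ = β * x := by ring

end DiscountRate

theorem stmt_16_general {u : EReal} {f F : ℝ → ℝ} {ρ α d x : ℝ} (hρ1 : ρ < 1) (hα : 0 < α)
    (hd : 0 < d) (hdρ : d < ρ) (hstat : ρ * (α + d ^ (α + 1)) = (α + 1) * d)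
    (hx : 0 < x) (hxu : (x : EReal) < u)
    (hF_deriv : ∀ z : ℝ, x ≤ z → (z : EReal) < u → HasDerivAt F (f z) z)
    (hF_lt : ∀ z : ℝ, x ≤ z → (z : EReal) < u → F z < 1)
    (hG : ∀ z : ℝ, x ≤ z → (z : EReal) < u → 1 / (α + 1) ≤ z * f z / (1 - F z)) :
    IsGreatest
      {v : ℝ | ∃ y δ : ℝ, x ≤ y ∧ (y : EReal) < u ∧ 0 < δ ∧ δ < ρ ∧
        v = x - δ ^ (α + 1) * y +
          ρ * δ ^ α * ((1 - F y) / (1 - F x)) * lendingValue ρ α d * y}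
      (lendingValue ρ α d * x) ∧
    x - d ^ (α + 1) * x + ρ * d ^ α * ((1 - F x) / (1 - F x)) * lendingValue ρ α d * x =
      lendingValue ρ α d * x := by
  have hSx : 0 < 1 - F x := sub_pos.2 (hF_lt x le_rfl hxu)
  have hdρ_ne : d ^ α * ρ ≠ 1 := (mul_lt_one_of_nonneg_of_lt_one_right
    (Real.rpow_le_one hd.le (hdρ.trans hρ1).le hα.le) (hd.trans hdρ).le hρ1).ne
  have hval : x - d ^ (α + 1) * x + ρ * d ^ α * ((1 - F x) / (1 - F x)) *
      lendingValue ρ α d * x = lendingValue ρ α d * x := by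
    rw [div_self hSx.ne']
    linear_combination -x * lendingValue_eq_one_sub_add hdρ_ne
  refine ⟨⟨⟨x, d, le_rfl, hxu, hd, hdρ, hval.symm⟩, ?_⟩, hval⟩
  rintro _ ⟨y, δ, hxy, hyu, hδ, -, rfl⟩
  have hlt : ∀ z ∈ Icc x y, (z : EReal) < u := fun z hz ↦
    (EReal.coe_le_coe_iff.2 hz.2).trans_lt hyu
  have hyq : y * ((1 - F y) / (1 - F x)) ^ (α + 1) ≤ x :=
    mul_survival_ratio_rpow_le (by positivity) hxy (fun z hz ↦ hF_deriv z hz.1 (hlt z hz))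
      (fun z hz ↦ hF_lt z hz.1 (hlt z hz)) fun z hz ↦ hG z hz.1 (hlt z hz)
  exact payoff_le_lendingValue_mul hα hd hdρ_ne hstat (hx.le.trans hxy)
    (div_pos (sub_pos.2 (hF_lt y hxy hyu)) hSx) hyq hδ.le

/-- Constant demand elasticity s(d) = d^α. For states x ≥ x̄
(where G(x̄) = 1/(α+1)), the one-step Bellman supremum over repayment amounts
y ∈ [x,u) and discount rates δ ∈ (0,ρ) of
x − δ^{α+1}y + ρ δ^α ((1−F(y))/(1−F(x))) β y equals β·x, attained at
(y,δ) = (x,d*). -/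
theorem stmt_16 (u : EReal) (hu : 0 < u)
    (f : ℝ → ℝ) (hf_cont : Continuous f)
    (hf_pos : ∀ x : ℝ, 0 < x → (x : EReal) < u → 0 < f x)
    (hf_zero : ∀ x : ℝ, x ≤ 0 ∨ u ≤ (x : EReal) → f x = 0)
    (hf_prob : ∫ t : ℝ, f t = 1)
    (F : ℝ → ℝ) (hF : ∀ x : ℝ, F x = ∫ t in (0:ℝ)..x, f t)
    (hF_deriv : ∀ x : ℝ, 0 < x → (x : EReal) < u → HasDerivAt F (f x) x)
    (hF_lt : ∀ x : ℝ, (x : EReal) < u → F x < 1)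
    (G : ℝ → ℝ) (hG : ∀ x : ℝ, G x = x * f x / (1 - F x))
    -- Assumption 1:
    (hG_mono : StrictMonoOn G {x : ℝ | 0 ≤ x ∧ (x : EReal) < u})
    (hG_zero : G 0 = 0)
    (hG_lim : ∀ c : ℝ, c < 1 → ∃ x : ℝ, 0 ≤ x ∧ (x : EReal) < u ∧ c < G x)
    (ρ α : ℝ) (hρ0 : 0 < ρ) (hρ1 : ρ < 1) (hα0 : 0 < α) (hα1 : α < 1)
    (dstar : ℝ) (hdstar : 0 < dstar ∧ dstar < ρ)
    (hdstar_eq : ρ * (α + dstar ^ (α + 1)) = (α + 1) * dstar)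
    (hdstar_uniq : ∀ d : ℝ, 0 < d → d < ρ → ρ * (α + d ^ (α + 1)) = (α + 1) * d →
      d = dstar)
    (β : ℝ) (hβ : β = (1 - dstar ^ (α + 1)) / (1 - dstar ^ α * ρ))
    (xbar : ℝ) (hxbar : 0 < xbar ∧ (xbar : EReal) < u)
    (hxbar_eq : G xbar = 1 / (α + 1)) :
    ∀ x : ℝ, xbar ≤ x → (x : EReal) < u →
      IsGreatest
        {v : ℝ | ∃ y δ : ℝ, x ≤ y ∧ (y : EReal) < u ∧ 0 < δ ∧ δ < ρ ∧
          v = x - δ ^ (α + 1) * y + ρ * δ ^ α * ((1 - F y) / (1 - F x)) * β * y}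
        (β * x) ∧
      x - dstar ^ (α + 1) * x + ρ * dstar ^ α * ((1 - F x) / (1 - F x)) * β * x =
        β * x := by
  intro x hx hxu
  subst hβ
  have hx0 : 0 < x := hxbar.1.trans_le hx
  have hG_le : ∀ z : ℝ, x ≤ z → (z : EReal) < u → 1 / (α + 1) ≤ z * f z / (1 - F z) := by
    intro z hz hzu
    rw [← hG, ← hxbar_eq]
    exact hG_mono.monotoneOn ⟨hxbar.1.le, hxbar.2⟩ ⟨(hx0.trans_le hz).le, hzu⟩ (hx.trans hz)
  exact stmt_16_general hρ1 hα0 hdstar.1 hdstar.2 hdstar_eq hx0 hxu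
    (fun z hz ↦ hF_deriv z (hx0.trans_le hz)) (fun z _ ↦ hF_lt z) hG_le
end
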